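/- arXiv:2304.05859 — 4 statements merged into one kernel-verified Lean document; each statement's English description precedes it below -/
import Mathlib

section
/- Let G be a connected graph (possibly with one pair of parallel edges, which counts as a cycle) of order n with exactly one cycle and maximum degree at most k, where k ≥ 3. Then G has a matching of size at least n/k. -/
open Classical in
theorem ub_key {V : Type*} [Fintype V] (H : SimpleGraph V) (k : ℕ) (hk : 3 ≤ k)
    (hdeg : ∀ v, H.degree v ≤ k)
    (hP : ∀ S : Finset V, (H.edgeFinset.filter (fun e => ∀ x ∈ e, x ∈ S)).card ≤ S.card)
    (a b : V) (hab : H.Adj a b) :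
    ∃ u v, H.Adj u v ∧ H.degree u + H.degree v ≤ k + 1 := by
  by_cases h1 : ∃ u, H.degree u = 1
  · obtain ⟨u, hu⟩ := h1
    have : 0 < H.degree u := by omega
    obtain ⟨v, hv⟩ := (H.degree_pos_iff_exists_adj u).1 this
    exact ⟨u, v, hv, by have := hdeg v; omega⟩
  · push Not at h1
    let S : Finset V := Finset.univ.filter (fun v => H.degree v ≠ 0)
    have hS := hP S
    have e1 : H.edgeFinset.filter (fun e => ∀ x ∈ e, x ∈ S) = H.edgeFinset := by
      apply Finset.filter_true_of_mem
      intro e he x hx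
      simp only [S, Finset.mem_filter, Finset.mem_univ, true_and]
      have : 0 < H.degree x := by
        rw [H.degree_pos_iff_exists_adj]
        obtain ⟨y, rfl⟩ := hx
        exact ⟨y, by simpa using he⟩
      omega
    rw [e1] at hS
    have hsum := H.sum_degrees_eq_twice_card_edges
    have h2 : ∑ v ∈ S, H.degree v = ∑ v, H.degree v := by
      apply Finset.sum_subset (Finset.subset_univ _)
      intro x _ hx
      simpa [S] using hx
    have hge : ∀ v ∈ S, 2 ≤ H.degree v := by
      intro v hv
      have h0 : H.degree v ≠ 0 := (Finset.mem_filter.1 hv).2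
      have := h1 v
      omega
    have heq : ∑ v ∈ S, 2 = ∑ v ∈ S, H.degree v := by
      apply le_antisymm (Finset.sum_le_sum hge)
      rw [h2, hsum, Finset.sum_const, smul_eq_mul]
      omega
    have hall := (Finset.sum_eq_sum_iff_of_le hge).1 heq
    have ha : a ∈ S := by
      have := (H.degree_pos_iff_exists_adj a).2 ⟨b, hab⟩
      exact Finset.mem_filter.2 ⟨Finset.mem_univ _, by omega⟩
    have hb : b ∈ S := by
      have := (H.degree_pos_iff_exists_adj b).2 ⟨a, hab.symm⟩
      exact Finset.mem_filter.2 ⟨Finset.mem_univ _, by omega⟩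
    have := hall a ha
    have := hall b hb
    exact ⟨a, b, hab, by omega⟩

open Classical in
theorem ub_main {V : Type*} [Fintype V] (k : ℕ) (hk : 3 ≤ k) (n : ℕ) :
    ∀ (H : SimpleGraph V), H.edgeFinset.card = n →
    (∀ v, H.degree v ≤ k) →
    (∀ S : Finset V, (H.edgeFinset.filter (fun e => ∀ x ∈ e, x ∈ S)).card ≤ S.card) →
    ∃ M : H.Subgraph, M.IsMatching ∧ H.edgeFinset.card ≤ k * M.edgeSet.ncard := by
  induction n using Nat.strong_induction_on with
  | _ n ih =>
  intro H hn hdeg hP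
  by_cases hE : ∃ a b, H.Adj a b
  · obtain ⟨a, b, hab⟩ := hE
    obtain ⟨u, v, huv, hd⟩ := ub_key H k hk hdeg hP a b hab
    obtain ⟨H', hH'⟩ : ∃ H' : SimpleGraph V,
        H' = H.deleteEdges (H.incidenceSet u ∪ H.incidenceSet v) := ⟨_, rfl⟩
    have hle : H' ≤ H := hH' ▸ SimpleGraph.deleteEdges_le _
    have hefs : H'.edgeFinset ⊆ H.edgeFinset := SimpleGraph.edgeFinset_mono hle
    have hef : H.edgeFinset ⊆ H'.edgeFinset ∪ (H.incidenceFinset u ∪ H.incidenceFinset v) := by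
      intro e he
      simp only [Finset.mem_union, SimpleGraph.mem_edgeFinset, SimpleGraph.mem_incidenceFinset,
        hH', SimpleGraph.edgeSet_deleteEdges, Set.mem_sdiff, Set.mem_union] at he ⊢
      tauto
    have hc1 := Finset.card_le_card hef
    have hc2 := Finset.card_union_le H'.edgeFinset (H.incidenceFinset u ∪ H.incidenceFinset v)
    have hc3 := Finset.card_union_add_card_inter (H.incidenceFinset u) (H.incidenceFinset v)
    have hc4 : 0 < (H.incidenceFinset u ∩ H.incidenceFinset v).card := by
      apply Finset.card_pos.2
      refine ⟨s(u, v), ?_⟩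
      simp [SimpleGraph.incidenceSet, huv]
    rw [H.card_incidenceFinset_eq_degree, H.card_incidenceFinset_eq_degree] at hc3
    have hlt : H'.edgeFinset.card < n := by
      rw [← hn]
      apply Finset.card_lt_card
      refine ⟨hefs, fun h => ?_⟩
      have h5 : s(u, v) ∈ H'.edgeFinset := h (by simpa using huv)
      rw [SimpleGraph.mem_edgeFinset, hH'] at h5
      simp [SimpleGraph.incidenceSet, huv] at h5
    have hdeg' : ∀ w, H'.degree w ≤ k := fun w =>
      (SimpleGraph.degree_le_of_le hle).trans (hdeg w)
    obtain ⟨M, hM, hMc⟩ := ih _ hlt H' rfl hdeg' (fun S =>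
      (Finset.card_le_card (Finset.filter_subset_filter _ hefs)).trans (hP S))
    let M1 : H.Subgraph := M.map (SimpleGraph.Hom.ofLE hle)
    have hM1 : M1.IsMatching := hM.map_ofLE hle
    have hv1 : M1.verts = M.verts := by simp [M1]
    have hA1 : ∀ x y, M1.Adj x y ↔ M.Adj x y := by
      intro x y
      simp [M1, Relation.Map]
    have hnot : ∀ x y, M.Adj x y → x ≠ u ∧ x ≠ v := by
      intro x y h
      have h6 := M.adj_sub h
      simp only [hH', SimpleGraph.deleteEdges_adj, Set.mem_union, SimpleGraph.incidenceSet,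
        Set.mem_ofPred_eq, SimpleGraph.mem_edgeSet, Sym2.mem_iff] at h6
      constructor <;> rintro rfl <;> simp at h6 <;> tauto
    have hdis : Disjoint M1.support (H.subgraphOfAdj huv).support := by
      rw [Set.disjoint_left]
      rintro x ⟨y, hy⟩ ⟨z, hz⟩
      have := hnot x y ((hA1 x y).1 hy)
      simp at hz
      rcases hz with h | h
      · exact this.1 h.1.symm
      · exact this.2 h.2.symm
    refine ⟨M1 ⊔ H.subgraphOfAdj huv, hM1.sup (SimpleGraph.Subgraph.IsMatching.subgraphOfAdj huv) hdis, ?_⟩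
    have hes : M1.edgeSet = M.edgeSet := by
      ext e
      induction e with
      | _ x y => simp [hA1]
    have hcard : (M1 ⊔ H.subgraphOfAdj huv).edgeSet.ncard = M.edgeSet.ncard + 1 := by
      rw [SimpleGraph.Subgraph.edgeSet_sup, hes, SimpleGraph.edgeSet_subgraphOfAdj,
        Set.union_singleton, Set.ncard_insert_of_notMem]
      · intro h
        exact (hnot u v h).1 rfl
    rw [hcard, mul_add]
    omega
  · refine ⟨⊥, by simp [SimpleGraph.Subgraph.IsMatching], ?_⟩
    have : H.edgeFinset = ∅ := by
      ext e
      induction e with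
      | _ x y =>
        have : ¬ H.Adj x y := fun h => hE ⟨x, y, h⟩
        simp [this]
    simp [this]

open Classical in
theorem ub_sparse {V : Type*} [Fintype V] (G : SimpleGraph V)
    (hconn : G.Connected) (hu : G.edgeFinset.card = Fintype.card V) (S : Finset V) :
    (G.edgeFinset.filter (fun e => ∀ x ∈ e, x ∈ S)).card ≤ S.card := by
  rcases S.eq_empty_or_nonempty with rfl | ⟨s, hs⟩
  · simp only [Finset.card_empty, Nat.le_zero, Finset.card_eq_zero]
    apply Finset.filter_false_of_mem
    intro e _ h
    induction e with
    | _ x y => exact absurd (h x (by simp)) (by simp)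
  have hp : ∀ v, v ≠ s → ∃ w, G.Adj v w ∧ G.dist v s = G.dist w s + 1 := by
    intro v hv
    obtain ⟨p, hp⟩ := hconn.exists_walk_length_eq_dist v s
    cases p with
    | nil => exact absurd rfl hv
    | @cons _ w _ h q =>
      refine ⟨w, h, le_antisymm ?_ ?_⟩
      · have := hconn.dist_triangle (u := v) (v := w) (w := s)
        rw [SimpleGraph.dist_eq_one_iff_adj.2 h] at this
        omega
      · rw [← hp, SimpleGraph.Walk.length_cons]
        have := SimpleGraph.dist_le q
        omega
  choose! f hf using hp
  have hinj : (Sᶜ).card ≤ (G.edgeFinset.filter (fun e => ¬ ∀ x ∈ e, x ∈ S)).card := by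
    apply Finset.card_le_card_of_injOn (fun v => s(v, f v))
    · intro v hv
      have hv' : v ∉ S := by simpa using hv
      have hvs : v ≠ s := fun h => hv' (h ▸ hs)
      simp only [Finset.coe_filter, Set.mem_ofPred_eq, SimpleGraph.mem_edgeFinset,
        SimpleGraph.mem_edgeSet]
      exact ⟨(hf v hvs).1, fun h => hv' (h v (by simp))⟩
    · intro v hv w hw h
      have hv' : v ∉ S := by simpa using hv
      have hvs : v ≠ s := fun h => hv' (h ▸ hs)
      have hw' : w ∉ S := by simpa using hw
      have hws : w ≠ s := fun h => hw' (h ▸ hs)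
      have h1 := (hf v hvs).2
      have h2 := (hf w hws).2
      simp only [Sym2.eq_iff] at h
      rcases h with h | ⟨h, h'⟩
      · exact h.1
      · rw [h'] at h1
        rw [← h] at h2
        omega
  have hsplit := Finset.card_filter_add_card_filter_not (s := G.edgeFinset) (fun e => ∀ x ∈ e, x ∈ S)
  have hcc := Finset.card_add_card_compl S
  omega

/-- A connected graph of order `n` with exactly one cycle (equivalently, with
exactly as many edges as vertices) and maximum degree at most `k`, `k ≥ 3`,
has a matching of size at least `n/k`. -/
theorem unicyclic_matching_bound {V : Type*} [Fintype V] (G : SimpleGraph V)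
    [DecidableRel G.Adj] (k : ℕ) (hk : 3 ≤ k)
    (hconn : G.Connected) (hunicyclic : G.edgeSet.ncard = Fintype.card V)
    (hdeg : ∀ v : V, G.degree v ≤ k) :
    ∃ M : G.Subgraph, M.IsMatching ∧ Fintype.card V ≤ k * M.edgeSet.ncard := by
  classical
  have hu : G.edgeFinset.card = Fintype.card V := by
    rw [← hunicyclic, ← SimpleGraph.coe_edgeFinset, Set.ncard_coe_finset]
  have h := ub_main k hk _ G rfl (fun v => by convert hdeg v)
    (ub_sparse G hconn (by convert hu))
  obtain ⟨M, hM, hc⟩ := h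
  refine ⟨M, hM, ?_⟩
  rw [← hu]
  convert hc
end

section
/- Let G be a planar simple graph and let K₂(G) = L₂(G) ∪ H₂(G), where L₂(G) is the set of vertices of degree at most 2 that have a neighbor of degree no larger than their own, and H₂(G) is the set of vertices of degree greater than 2. Then |K₂(G)| ≤ 3ν(G). -/
/-- A graph is planar if it has a topological embedding in the plane: vertices
are distinct points, edges are injective continuous arcs joining their
endpoints whose interiors avoid vertices, and distinct edges meet only at
common endpoints. -/
def SimpleGraph.IsPlanar {V : Type*} (G : SimpleGraph V) : Prop :=
  ∃ (pos : V → ℝ × ℝ) (γ : ∀ ⦃u v : V⦄, G.Adj u v → unitInterval → ℝ × ℝ),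
    Function.Injective pos ∧
    (∀ ⦃u v : V⦄ (h : G.Adj u v),
      Continuous (γ h) ∧ Function.Injective (γ h) ∧
      γ h 0 = pos u ∧ γ h 1 = pos v) ∧
    (∀ ⦃u v : V⦄ (h : G.Adj u v) (t : unitInterval),
      γ h.symm (unitInterval.symm t) = γ h t) ∧
    (∀ ⦃u v : V⦄ (h : G.Adj u v) (t : unitInterval),
      t ≠ 0 → t ≠ 1 → ∀ w : V, γ h t ≠ pos w) ∧
    (∀ ⦃u v u' v' : V⦄ (h : G.Adj u v) (h' : G.Adj u' v') (t t' : unitInterval),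
      s(u, v) ≠ s(u', v') → γ h t = γ h' t' → t = 0 ∨ t = 1)

noncomputable section
open Classical
namespace K2P


abbrev GE := Bool × ℤ × ℤ
def end0 (g : GE) : ℤ × ℤ := g.2
def end1 (g : GE) : ℤ × ℤ := if g.1 then (g.2.1, g.2.2 + 1) else (g.2.1 + 1, g.2.2)
def fl (g : GE) : ℤ × ℤ := g.2
def fr (g : GE) : ℤ × ℤ := if g.1 then (g.2.1 - 1, g.2.2) else (g.2.1, g.2.2 - 1)
def star (x : ℤ × ℤ) : Finset GE :=
  {(false, x.1, x.2), (false, x.1 - 1, x.2), (true, x.1, x.2), (true, x.1, x.2 - 1)}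
def gadj (x y : ℤ × ℤ) : Prop :=
  ∃ g, (end0 g = x ∧ end1 g = y) ∨ (end0 g = y ∧ end1 g = x)

lemma mem_star (g : GE) (x : ℤ × ℤ) : g ∈ star x ↔ (x = end0 g ∨ x = end1 g) := by
  obtain ⟨d, i, j⟩ := g
  obtain ⟨a, b⟩ := x
  cases d <;> simp [star, end0, end1] <;> omega

lemma end_ne (g : GE) : end0 g ≠ end1 g := by
  obtain ⟨d, i, j⟩ := g
  cases d <;> simp [end0, end1]

lemma star_sum (f : GE → ZMod 2) (x : ℤ × ℤ) : ∑ g ∈ star x, f g =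
    f (false, x.1, x.2) + f (false, x.1 - 1, x.2) + f (true, x.1, x.2) + f (true, x.1, x.2 - 1) := by
  unfold star
  obtain ⟨a, b⟩ := x
  rw [Finset.sum_insert (by simp; omega), Finset.sum_insert (by simp), Finset.sum_insert (by simp; omega),
    Finset.sum_singleton]
  ring

lemma star_zero (ψ : ℤ × ℤ → ZMod 2) (x : ℤ × ℤ) :
    ∑ g ∈ star x, (ψ (fl g) + ψ (fr g)) = 0 := by
  rw [star_sum]
  simp only [fl, fr]
  simp only [Bool.false_eq_true, if_false, if_true]
  have h : (2 : ZMod 2) = 0 := rfl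
  linear_combination (ψ (x.1, x.2) + ψ (x.1, x.2 - 1) + ψ (x.1 - 1, x.2) + ψ (x.1-1, x.2-1)) * h

/-- boundary -/
def bd : (GE →₀ ZMod 2) →ₗ[ZMod 2] (ℤ × ℤ →₀ ZMod 2) :=
  Finsupp.linearCombination (ZMod 2) (fun g => Finsupp.single (end0 g) 1 + Finsupp.single (end1 g) 1)

lemma bd_single (g : GE) (a : ZMod 2) :
    bd (Finsupp.single g a) = a • (Finsupp.single (end0 g) 1 + Finsupp.single (end1 g) 1) := by
  simp [bd]

lemma bd_apply (P : GE →₀ ZMod 2) (x : ℤ × ℤ) : bd P x = ∑ g ∈ star x, P g := by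
  induction P using Finsupp.induction_linear with
  | zero => simp
  | add f g hf hg => simp [Finset.sum_add_distrib, hf, hg]
  | single g a =>
    rw [bd_single]
    simp only [Finsupp.smul_apply, Finsupp.add_apply, Finsupp.single_apply, Finset.sum_ite_eq,
      mem_star, smul_eq_mul]
    have := end_ne g
    by_cases h0 : x = end0 g
    · have h1 : ¬ (end1 g = x) := fun h => this (h0.symm.trans h.symm)
      have h1' : ¬ (end1 g = end0 g) := fun h => this h.symm
      rw [if_pos h0.symm, if_neg h1, if_pos (Or.inl h0)]; simp
    · by_cases h1 : x = end1 g
      · rw [if_neg (fun h => h0 h.symm), if_pos h1.symm, if_pos (Or.inr h1)]; simp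
      · rw [if_neg (fun h => h0 h.symm), if_neg (fun h => h1 h.symm), if_neg (by tauto)]; simp

lemma fill (P : GE →₀ ZMod 2) (hP : bd P = 0) :
    ∃ φ : ℤ × ℤ → ZMod 2, ∀ g, φ (fl g) + φ (fr g) = P g := by
  have h2 : (2 : ZMod 2) = 0 := rfl
  obtain ⟨N, hN⟩ : ∃ N : ℤ, ∀ d i j, j ≤ N → P (d, i, j) = 0 := by
    obtain ⟨N, hN⟩ := (P.support.image (fun g => g.2.2)).bddBelow
    refine ⟨N - 1, fun d i j hj => ?_⟩
    by_contra hne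
    have : j ∈ (P.support.image (fun g => g.2.2) : Finset ℤ) :=
      Finset.mem_image.2 ⟨(d, i, j), by simpa using hne, rfl⟩
    have := hN this
    omega
  let φ : ℤ × ℤ → ZMod 2 := fun x => ∑ k ∈ Finset.Ioc N x.2, P (false, x.1, k)
  have hz : ∀ i j, j ≤ N → φ (i, j) = 0 := by
    intro i j hj
    simp only [φ]
    rw [Finset.Ioc_eq_empty (by simpa using hj)]; simp
  have hstep : ∀ i j, φ (i, j) + φ (i, j - 1) = P (false, i, j) := by
    intro i j
    by_cases hj : j ≤ N
    · rw [hz _ _ hj, hz _ _ (by omega), hN _ _ _ hj]; simp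
    · have : Finset.Ioc N j = insert j (Finset.Ioc N (j - 1)) := by
        ext k; simp; omega
      simp only [φ]
      rw [this, Finset.sum_insert (by simp)]
      linear_combination (∑ k ∈ Finset.Ioc N (j-1), P (false, i, k)) * h2
  have hcyc : ∀ i j, P (false, i, j) + P (false, i - 1, j) + P (true, i, j) + P (true, i, j - 1) = 0 := by
    intro i j
    have := bd_apply P (i, j)
    rw [hP, star_sum] at this
    simpa using this.symm
  have hD : ∀ i (n : ℕ), φ (i, N + n) + φ (i - 1, N + n) = P (true, i, N + n) := by
    intro i n
    induction n with
    | zero => simp [hz, hN]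
    | succ n ih =>
      have a1 := hstep i (N + n + 1)
      have a2 := hstep (i - 1) (N + n + 1)
      have a3 := hcyc i (N + n + 1)
      have e : N + (n:ℤ) + 1 - 1 = N + n := by ring
      rw [e] at a1 a2 a3
      push_cast
      rw [← add_assoc]
      linear_combination a1 + a2 - ih + a3 - (P (true, i, N + n + 1) + P (true, i, N + n)) * h2
  refine ⟨φ, ?_⟩
  rintro ⟨d, i, j⟩
  cases d
  · simpa [fl, fr] using hstep i j
  · simp only [fl, fr, if_true]
    by_cases hj : j ≤ N
    · rw [hz _ _ hj, hz _ _ hj, hN _ _ _ hj]; simp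
    · obtain ⟨n, hn⟩ := Int.eq_ofNat_of_zero_le (show 0 ≤ j - N by omega)
      have : j = N + n := by omega
      rw [this]; exact hD i n

lemma path_chain (c : Finset (ℤ × ℤ)) (x y : ℤ × ℤ) (hx : x ∈ c)
    (h : Relation.ReflTransGen (fun x y => y ∈ c ∧ gadj x y) x y) :
    y ∈ c ∧ ∃ P : GE →₀ ZMod 2, bd P = Finsupp.single x 1 + Finsupp.single y 1 ∧
      ∀ g, P g ≠ 0 → end0 g ∈ c ∧ end1 g ∈ c := by
  have h2 : ∀ a : ℤ × ℤ →₀ ZMod 2, a + a = 0 := fun a => by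
    ext z; simp; exact CharTwo.add_self_eq_zero _
  induction h with
  | refl => exact ⟨hx, 0, by simp [h2], by simp⟩
  | tail hab hbc ih =>
    rename_i b d
    obtain ⟨hb, P, hP, hPs⟩ := ih
    obtain ⟨hd, g, hg⟩ := hbc
    refine ⟨hd, P + Finsupp.single g 1, ?_, ?_⟩
    · rw [map_add, hP, bd_single, one_smul]
      rcases hg with ⟨rfl, rfl⟩ | ⟨rfl, rfl⟩
      · rw [show ∀ a b c : ℤ × ℤ →₀ ZMod 2, a + b + (b + c) = a + c + (b + b) by intros; abel, h2,
          add_zero]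
      · rw [show ∀ a b c : ℤ × ℤ →₀ ZMod 2, a + b + (c + b) = a + c + (b + b) by intros; abel, h2,
          add_zero]
    · intro g' hg'
      by_cases e : g = g'
      · subst e
        rcases hg with ⟨rfl, rfl⟩ | ⟨rfl, rfl⟩
        · exact ⟨hb, hd⟩
        · exact ⟨hd, hb⟩
      · refine hPs g' ?_
        simpa [Finsupp.single_apply, e] using hg'


/-- incidence map -/
def T {V : Type*} (A B : Finset V) (E : Finset (V × V)) :
    (E → ZMod 2) →ₗ[ZMod 2] ((A ∪ B : Finset V) → ZMod 2) where
  toFun z v := ∑ e : E, ((if e.1.1 = v then z e else 0) + (if e.1.2 = v then z e else 0))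
  map_add' x y := by
    ext v
    simp only [Pi.add_apply]
    rw [← Finset.sum_add_distrib]
    refine Finset.sum_congr rfl fun e _ => ?_
    split_ifs <;> ring
  map_smul' a x := by
    ext v
    simp only [Pi.smul_apply, smul_eq_mul, RingHom.id_apply]
    rw [Finset.mul_sum]
    refine Finset.sum_congr rfl fun e _ => ?_
    split_ifs <;> ring

lemma T_apply {V : Type*} (A B : Finset V) (E : Finset (V × V)) (z : E → ZMod 2)
    (v : (A ∪ B : Finset V)) : T A B E z v =
    ∑ e : E, ((if e.1.1 = v then z e else 0) + (if e.1.2 = v then z e else 0)) := rfl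

lemma four_le {V : Type*} (A B : Finset V) (hAB : Disjoint A B) (E : Finset (V × V))
    (hE : ∀ e ∈ E, e.1 ∈ A ∧ e.2 ∈ B) (z : E → ZMod 2) (hz : T A B E z = 0) (hne : z ≠ 0) :
    4 ≤ (Finset.univ.filter (fun e => z e ≠ 0)).card := by
  have hd : ∀ a ∈ A, ∀ b ∈ B, a ≠ b := fun a ha b hb h =>
    Finset.disjoint_left.1 hAB ha (h ▸ hb)
  have h1 : ∀ e : E, z e ≠ 0 → ∃ e' : E, e' ≠ e ∧ e'.1.1 = e.1.1 ∧ z e' ≠ 0 := by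
    intro e he
    by_contra! hcon
    have := congrFun hz ⟨e.1.1, Finset.mem_union_left _ (hE e.1 e.2).1⟩
    rw [T_apply, Finset.sum_eq_single e] at this
    · rw [if_pos rfl, if_neg (fun h => hd _ (hE e.1 e.2).1 _ (hE e.1 e.2).2 h.symm)] at this
      simp at this; exact he this
    · intro e' _ hne'
      rw [if_neg (c := e'.1.2 = _) (fun h => hd _ (hE e.1 e.2).1 _ (hE e'.1 e'.2).2 h.symm)]
      split_ifs with h
      · simpa using hcon e' hne' h
      · simp
    · simp
  have h2 : ∀ e : E, z e ≠ 0 → ∃ e' : E, e' ≠ e ∧ e'.1.2 = e.1.2 ∧ z e' ≠ 0 := by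
    intro e he
    by_contra! hcon
    have := congrFun hz ⟨e.1.2, Finset.mem_union_right _ (hE e.1 e.2).2⟩
    rw [T_apply, Finset.sum_eq_single e] at this
    · rw [if_pos rfl, if_neg (fun h => hd _ (hE e.1 e.2).1 _ (hE e.1 e.2).2 h)] at this
      simp at this; exact he this
    · intro e' _ hne'
      rw [if_neg (fun h => hd _ (hE e'.1 e'.2).1 _ (hE e.1 e.2).2 h)]
      split_ifs with h
      · simpa using hcon e' hne' h
      · simp
    · simp
  obtain ⟨e, he⟩ : ∃ e, z e ≠ 0 := by
    by_contra! h; exact hne (funext h)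
  obtain ⟨e1, n1, q1, z1⟩ := h1 e he
  obtain ⟨e2, n2, q2, z2⟩ := h2 e he
  obtain ⟨e3, n3, q3, z3⟩ := h2 e1 z1
  have key : e1.1.2 ≠ e.1.2 := fun h => n1 (Subtype.ext (Prod.ext q1 h))
  have a1 : e2 ≠ e1 := fun h => key (by rw [← h, q2])
  have a2 : e3 ≠ e := fun h => key (by rw [← q3, h])
  have a3 : e3 ≠ e2 := fun h => key (by rw [← q3, h, q2])
  have hc : ({e, e1, e2, e3} : Finset E).card = 4 := by
    rw [Finset.card_insert_of_notMem, Finset.card_insert_of_notMem, Finset.card_insert_of_notMem,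
      Finset.card_singleton]
    · simpa using a3.symm
    · simp; exact ⟨a1.symm, n3.symm⟩
    · simp; exact ⟨n1.symm, n2.symm, a2.symm⟩
  rw [← hc]
  refine Finset.card_le_card ?_
  intro x hx
  simp at hx
  simp
  rcases hx with rfl | rfl | rfl | rfl <;> assumption

lemma grid_bound {V : Type*} (A B : Finset V) (hAB : Disjoint A B) (E : Finset (V × V))
    (hE : ∀ e ∈ E, e.1 ∈ A ∧ e.2 ∈ B) (c : V → Finset (ℤ × ℤ))
    (hdis : ∀ u ∈ A ∪ B, ∀ v ∈ A ∪ B, ∀ x, x ∈ c u → x ∈ c v → u = v)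
    (hconn : ∀ u ∈ A ∪ B, ∃ r ∈ c u, ∀ x ∈ c u,
      Relation.ReflTransGen (fun x y => y ∈ c u ∧ gadj x y) r x)
    (hadj : ∀ e ∈ E, ∃ x ∈ c e.1, ∃ y ∈ c e.2, gadj x y) :
    E.card ≤ 2 * (A.card + B.card) := by
  have h2 : ∀ a : ℤ × ℤ →₀ ZMod 2, a + a = 0 := fun a => by
    ext z; simp; exact CharTwo.add_self_eq_zero _
  have hd : ∀ a ∈ A, ∀ b ∈ B, a ≠ b := fun a ha b hb h =>
    Finset.disjoint_left.1 hAB ha (h ▸ hb)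
  have hl : ∀ e : E, e.1.1 ∈ A ∪ B := fun e => Finset.mem_union_left _ (hE e.1 e.2).1
  have hr : ∀ e : E, e.1.2 ∈ A ∪ B := fun e => Finset.mem_union_right _ (hE e.1 e.2).2
  have hlr : ∀ e : E, e.1.1 ≠ e.1.2 := fun e => hd _ (hE e.1 e.2).1 _ (hE e.1 e.2).2
  have hg : ∀ e : E, ∃ g : GE, (end0 g ∈ c e.1.1 ∧ end1 g ∈ c e.1.2) ∨
      (end0 g ∈ c e.1.2 ∧ end1 g ∈ c e.1.1) := by
    intro e
    obtain ⟨x, hx, y, hy, g, ⟨rfl, rfl⟩ | ⟨rfl, rfl⟩⟩ := hadj e.1 e.2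
    · exact ⟨g, Or.inl ⟨hx, hy⟩⟩
    · exact ⟨g, Or.inr ⟨hy, hx⟩⟩
  choose g hg using hg
  let inner : GE → Prop := fun g => ∃ u ∈ A ∪ B, end0 g ∈ c u ∧ end1 g ∈ c u
  have hgin : ∀ e, ¬ inner (g e) := by
    rintro e ⟨u, hu, h0, h1⟩
    rcases hg e with ⟨a, b⟩ | ⟨a, b⟩
    · exact hlr e ((hdis _ (hl e) _ hu _ a h0).trans (hdis _ hu _ (hr e) _ h1 b))
    · exact hlr e ((hdis _ (hl e) _ hu _ b h1).trans (hdis _ hu _ (hr e) _ h0 a))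
  have hginj : Function.Injective g := by
    intro e e' h
    have he := hg e
    have he' := hg e'
    rw [h] at he
    rcases he with ⟨a, b⟩ | ⟨a, b⟩ <;> rcases he' with ⟨a', b'⟩ | ⟨a', b'⟩
    · exact Subtype.ext (Prod.ext (hdis _ (hl e) _ (hl e') _ a a') (hdis _ (hr e) _ (hr e') _ b b'))
    · exact absurd (hdis _ (hl e) _ (hr e') _ a a') (hd _ (hE e.1 e.2).1 _ (hE e'.1 e'.2).2)
    · exact absurd (hdis _ (hl e') _ (hr e) _ a' a) (hd _ (hE e'.1 e'.2).1 _ (hE e.1 e.2).2)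
    · exact Subtype.ext (Prod.ext (hdis _ (hl e) _ (hl e') _ b b') (hdis _ (hr e) _ (hr e') _ a a'))
  let HH : GE → Prop := fun g' => inner g' ∨ ∃ e, g' = g e
  let Rl : ℤ × ℤ → ℤ × ℤ → Prop := fun x y => ∃ g', ¬ HH g' ∧ x = fl g' ∧ y = fr g'
  let q : ℤ × ℤ → Quot Rl := Quot.mk Rl
  have hq : ∀ g', ¬ HH g' → q (fl g') = q (fr g') := fun g' h => Quot.sound ⟨g', h, rfl, rfl⟩
  let b : Quot Rl → (E → ZMod 2) := fun f e =>
    (if q (fl (g e)) = f then 1 else 0) + (if q (fr (g e)) = f then 1 else 0)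
  -- the faces are cycles
  have hbC : ∀ f, T A B E (b f) = 0 := by
    intro f
    ext ⟨u, hu⟩
    let ψ : ℤ × ℤ → ZMod 2 := fun x => if q x = f then 1 else 0
    have hψ : ∀ e, b f e = ψ (fl (g e)) + ψ (fr (g e)) := fun e => rfl
    have e1 : ∑ x ∈ c u, ∑ g' ∈ star x, (ψ (fl g') + ψ (fr g')) = 0 :=
      Finset.sum_eq_zero fun x _ => star_zero ψ x
    rw [Finset.sum_comm' (t' := (c u).biUnion star) (s' := fun g' => (c u).filter (fun x => g' ∈ star x))
      (by intro x y; simp; tauto)] at e1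
    simp only [Finset.sum_const] at e1
    have e2 : ∀ g' ∈ (c u).biUnion star,
        ((c u).filter (fun x => g' ∈ star x)).card • (ψ (fl g') + ψ (fr g')) =
        ∑ e : E, if g e = g' then ((if e.1.1 = u then b f e else 0) + (if e.1.2 = u then b f e else 0)) else 0 := by
      intro g' _
      have hfil : (c u).filter (fun x => g' ∈ star x) =
          ({end0 g', end1 g'} : Finset _).filter (fun x => x ∈ c u) := by
        ext x; simp [mem_star]; tauto
      rw [hfil]
      by_cases hH : HH g'
      · rcases hH with ⟨w, hw, h0, h1⟩ | ⟨e, rfl⟩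
        · rw [Finset.sum_eq_zero]
          · by_cases hwu : w = u
            · subst hwu
              rw [Finset.filter_true_of_mem (by simp [h0, h1]), Finset.card_pair (end_ne g'), two_smul]
              exact CharTwo.add_self_eq_zero _
            · have n0 : end0 g' ∉ c u := fun h => hwu (hdis _ hw _ hu _ h0 h)
              have n1 : end1 g' ∉ c u := fun h => hwu (hdis _ hw _ hu _ h1 h)
              rw [Finset.filter_false_of_mem (by simp [n0, n1])]; simp
          · intro e _
            rw [if_neg]
            rintro rfl
            exact hgin e ⟨w, hw, h0, h1⟩
        · rw [Finset.sum_eq_single e (fun e' _ hne => if_neg (fun h => hne (hginj h))) (by simp),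
            if_pos rfl, ← hψ]
          have hiff : ∀ x w, w ∈ A ∪ B → x ∈ c w → (x ∈ c u ↔ w = u) := by
            intro x w hw hx
            exact ⟨fun h => hdis _ hw _ hu _ hx h, fun h => h ▸ hx⟩
          have hl' := hl e
          have hr' := hr e
          have hne := end_ne (g e)
          have hlr' := hlr e
          rcases hg e with ⟨a, a'⟩ | ⟨a, a'⟩
          · rw [Finset.filter_insert, Finset.filter_singleton]
            by_cases c1 : e.1.1 = u
            · have c2 : ¬ e.1.2 = u := fun h => hlr' (c1.trans h.symm)
              simp [hiff _ _ hl' a, hiff _ _ hr' a', c1, c2]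
            · by_cases c2 : e.1.2 = u <;> simp [hiff _ _ hl' a, hiff _ _ hr' a', c1, c2]
          · rw [Finset.filter_insert, Finset.filter_singleton]
            by_cases c1 : e.1.1 = u
            · have c2 : ¬ e.1.2 = u := fun h => hlr' (c1.trans h.symm)
              simp [hiff _ _ hr' a, hiff _ _ hl' a', c1, c2]
            · by_cases c2 : e.1.2 = u <;> simp [hiff _ _ hr' a, hiff _ _ hl' a', c1, c2]
      · have : ψ (fl g') = ψ (fr g') := by simp only [ψ, hq g' hH]
        rw [this, CharTwo.add_self_eq_zero, smul_zero, Finset.sum_eq_zero]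
        intro e _
        rw [if_neg]
        rintro rfl
        exact hH (Or.inr ⟨e, rfl⟩)
    rw [Finset.sum_congr rfl e2, Finset.sum_comm] at e1
    rw [T_apply, Pi.zero_apply]
    refine Eq.trans ?_ e1
    refine Finset.sum_congr rfl fun e _ => ?_
    rw [Finset.sum_ite_eq]
    by_cases hm : g e ∈ (c u).biUnion star
    · rw [if_pos hm]
    · rw [if_neg hm]
      have hm' : end0 (g e) ∉ c u ∧ end1 (g e) ∉ c u := by
        simp only [Finset.mem_biUnion, mem_star, not_exists, not_and, not_or] at hm
        exact ⟨fun h => (hm _ h).1 rfl, fun h => (hm _ h).2 rfl⟩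
      have c1 : ¬ e.1.1 = u := by
        rintro rfl
        rcases hg e with ⟨a, a'⟩ | ⟨a, a'⟩
        · exact hm'.1 a
        · exact hm'.2 a'
      have c2 : ¬ e.1.2 = u := by
        rintro rfl
        rcases hg e with ⟨a, a'⟩ | ⟨a, a'⟩
        · exact hm'.2 a'
        · exact hm'.1 a
      simp [c1, c2]
  -- cycles are spanned by faces
  let F0 : Finset (Quot Rl) := Finset.univ.image (fun e => q (fl (g e))) ∪
    Finset.univ.image (fun e => q (fr (g e)))
  let F1 := F0.filter (fun f => b f ≠ 0)
  have hspan : LinearMap.ker (T A B E) ≤ Submodule.span (ZMod 2) ((F1.image b : Finset _) : Set (E → ZMod 2)) := by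
    intro z hz
    have hz : T A B E z = 0 := hz
    have hroot : ∀ u : (A ∪ B : Finset V), ∃ r ∈ c u, ∀ x ∈ c u, ∃ P : GE →₀ ZMod 2,
        bd P = Finsupp.single r 1 + Finsupp.single x 1 ∧ ∀ g, P g ≠ 0 → inner g := by
      rintro ⟨u, hu⟩
      obtain ⟨r, hr, h⟩ := hconn u hu
      refine ⟨r, hr, fun x hx => ?_⟩
      obtain ⟨-, P, hP, hP'⟩ := path_chain (c u) r x hr (h x hx)
      exact ⟨P, hP, fun g hg => ⟨u, hu, hP' g hg⟩⟩
    choose ρ hρ Q hQ hQi using hroot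
    have hI : ∀ e : E, ∃ I : GE →₀ ZMod 2, bd (Finsupp.single (g e) 1 + I) =
        Finsupp.single (ρ ⟨e.1.1, hl e⟩) 1 + Finsupp.single (ρ ⟨e.1.2, hr e⟩) 1 ∧
        ∀ g, I g ≠ 0 → inner g := by
      intro e
      have aux : ∀ a b c d : ℤ × ℤ →₀ ZMod 2, a + b + ((c + a) + (d + b)) = c + d + ((a + a) + (b + b)) := by
        intros; abel
      have aux' : ∀ a b c d : ℤ × ℤ →₀ ZMod 2, a + b + ((c + b) + (d + a)) = c + d + ((a + a) + (b + b)) := by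
        intros; abel
      have supp : ∀ P Q : GE →₀ ZMod 2, (∀ g, P g ≠ 0 → inner g) → (∀ g, Q g ≠ 0 → inner g) →
          ∀ g, (P + Q) g ≠ 0 → inner g := by
        intro P Q h1 h2 g hg
        by_cases hp : P g = 0
        · refine h2 g ?_
          simpa [hp] using hg
        · exact h1 g hp
      rcases hg e with ⟨a, a'⟩ | ⟨a, a'⟩
      · refine ⟨Q ⟨e.1.1, hl e⟩ _ a + Q ⟨e.1.2, hr e⟩ _ a', ?_, supp _ _ (hQi _ _ _) (hQi _ _ _)⟩
        rw [map_add, map_add, hQ, hQ, bd_single, one_smul, aux, h2, h2, add_zero, add_zero]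
      · refine ⟨Q ⟨e.1.1, hl e⟩ _ a' + Q ⟨e.1.2, hr e⟩ _ a, ?_, supp _ _ (hQi _ _ _) (hQi _ _ _)⟩
        rw [map_add, map_add, hQ, hQ, bd_single, one_smul, aux', h2, h2, add_zero, add_zero]
    choose I hIb hIi using hI
    let Z : GE →₀ ZMod 2 := ∑ e : E, z e • (Finsupp.single (g e) 1 + I e)
    have hZ : bd Z = 0 := by
      have : bd Z = ∑ v : (A ∪ B : Finset V), (T A B E z v) • Finsupp.single (ρ v) (1 : ZMod 2) := by
        simp only [Z, map_sum, map_smul, hIb, T_apply, Finset.sum_smul]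
        rw [Finset.sum_comm]
        refine Finset.sum_congr rfl fun e _ => ?_
        simp only [add_smul, Finset.sum_add_distrib, ite_smul, zero_smul, smul_add]
        congr 1
        · rw [Finset.sum_eq_single ⟨e.1.1, hl e⟩]
          · simp
          · intro v _ hv
            rw [if_neg]; intro h; exact hv (Subtype.ext h.symm)
          · simp
        · rw [Finset.sum_eq_single ⟨e.1.2, hr e⟩]
          · simp
          · intro v _ hv
            rw [if_neg]; intro h; exact hv (Subtype.ext h.symm)
          · simp
      rw [this, hz]; simp
    have hZapp : ∀ g', Z g' = ∑ e : E, z e * ((if g e = g' then 1 else 0) + I e g') := by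
      intro g'
      simp only [Z, Finsupp.finsetSum_apply, Finsupp.smul_apply, Finsupp.add_apply,
        Finsupp.single_apply, smul_eq_mul]
    have hIg : ∀ e g', ¬ inner g' → I e g' = 0 := fun e g' h => by
      by_contra hh; exact h (hIi e g' hh)
    have hZg : ∀ e, Z (g e) = z e := by
      intro e
      rw [hZapp, Finset.sum_eq_single e]
      · rw [hIg _ _ (hgin e)]; simp
      · intro e' _ hne
        rw [hIg _ _ (hgin e), if_neg (fun h => hne (hginj h))]; simp
      · simp
    have hZn : ∀ g', ¬ HH g' → Z g' = 0 := by
      intro g' h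
      rw [hZapp]
      refine Finset.sum_eq_zero fun e _ => ?_
      rw [hIg _ _ (fun h' => h (Or.inl h')), if_neg (fun h' => h (Or.inr ⟨e, h'.symm⟩))]; simp
    obtain ⟨φ, hφ⟩ := fill Z hZ
    have hφc : ∀ x y, Rl x y → φ x = φ y := by
      rintro x y ⟨g', hn, rfl, rfl⟩
      have := hφ g'
      rw [hZn g' hn] at this
      exact CharTwo.add_eq_zero.1 this
    let φ' : Quot Rl → ZMod 2 := Quot.lift φ hφc
    have hφ' : ∀ x, φ' (q x) = φ x := fun x => rfl
    have hzz : z = ∑ f ∈ F1, φ' f • b f := by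
      have : ∑ f ∈ F1, φ' f • b f = ∑ f ∈ F0, φ' f • b f := by
        rw [Finset.sum_filter]
        refine Finset.sum_congr rfl fun f _ => ?_
        split_ifs with h
        · rfl
        · push Not at h; rw [h]; simp
      rw [this]
      ext e
      simp only [Finset.sum_apply, Pi.smul_apply, b, smul_eq_mul, mul_add, Finset.sum_add_distrib,
        mul_ite, mul_one, mul_zero]
      rw [Finset.sum_ite_eq, Finset.sum_ite_eq, if_pos, if_pos, hφ', hφ', hφ, hZg]
      · exact Finset.mem_union_right _ (Finset.mem_image_of_mem _ (Finset.mem_univ e))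
      · exact Finset.mem_union_left _ (Finset.mem_image_of_mem _ (Finset.mem_univ e))
    rw [hzz]
    refine Submodule.sum_mem _ fun f hf => Submodule.smul_mem _ _ (Submodule.subset_span ?_)
    exact Finset.mem_coe.2 (Finset.mem_image_of_mem _ hf)
  have d1 : Module.finrank (ZMod 2) (LinearMap.ker (T A B E)) ≤ F1.card :=
    (Submodule.finrank_mono hspan).trans ((finrank_span_finset_le_card _).trans Finset.card_image_le)
  have d2 := LinearMap.finrank_range_add_finrank_ker (T A B E)
  have d3 : Module.finrank (ZMod 2) (LinearMap.range (T A B E)) ≤ (A ∪ B).card := by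
    refine (Submodule.finrank_le _).trans ?_
    simp
  have d4 : (A ∪ B).card ≤ A.card + B.card := Finset.card_union_le _ _
  have d5 : Module.finrank (ZMod 2) (E → ZMod 2) = E.card := by simp
  have d6 : F1.card * 4 ≤ 2 * E.card := by
    have s1 : F1.card * 4 ≤ ∑ f ∈ F1, (Finset.univ.filter (fun e => b f e ≠ 0)).card := by
      rw [← smul_eq_mul]
      refine Finset.card_nsmul_le_sum _ _ _ fun f hf => ?_
      exact four_le A B hAB E hE _ (hbC f) (Finset.mem_filter.1 hf).2
    have s2 : ∑ f ∈ F1, (Finset.univ.filter (fun e => b f e ≠ 0)).card =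
        ∑ e : E, (F1.filter (fun f => b f e ≠ 0)).card := by
      simp only [Finset.card_filter]
      rw [Finset.sum_comm]
    have s3 : ∑ e : E, (F1.filter (fun f => b f e ≠ 0)).card ≤ ∑ e : E, 2 := by
      refine Finset.sum_le_sum fun e _ => ?_
      refine (Finset.card_le_card (t := {q (fl (g e)), q (fr (g e))}) ?_).trans Finset.card_le_two
      intro f hf
      have := (Finset.mem_filter.1 hf).2
      simp only [Finset.mem_insert, Finset.mem_singleton]
      by_contra! hcon
      apply this
      simp only [b]
      rw [if_neg hcon.1.symm, if_neg hcon.2.symm, add_zero]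
    have s4 : ∑ e : E, 2 = 2 * E.card := by simp [mul_comm]
    omega
  omega

lemma gadj_symm {x y : ℤ × ℤ} (h : gadj x y) : gadj y x := by
  obtain ⟨g, h⟩ := h
  exact ⟨g, h.symm⟩

lemma gadj_h (a b : ℤ) : gadj (a, b) (a + 1, b) := ⟨(false, a, b), Or.inl ⟨rfl, rfl⟩⟩
lemma gadj_v (a b : ℤ) : gadj (a, b) (a, b + 1) := ⟨(true, a, b), Or.inl ⟨rfl, rfl⟩⟩

lemma box_conn (a b c d : ℤ) (z : ℤ × ℤ) (hz : z ∈ Finset.Icc a b ×ˢ Finset.Icc c d) :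
    (a, c) ∈ Finset.Icc a b ×ˢ Finset.Icc c d ∧ Relation.ReflTransGen
      (fun x y => y ∈ Finset.Icc a b ×ˢ Finset.Icc c d ∧ gadj x y) (a, c) z := by
  obtain ⟨i, j⟩ := z
  simp only [Finset.mem_product, Finset.mem_Icc] at hz ⊢
  refine ⟨⟨by omega, by omega⟩, ?_⟩
  have h1 : ∀ n : ℕ, a + n ≤ b → Relation.ReflTransGen
      (fun x y : ℤ × ℤ => ((a ≤ y.1 ∧ y.1 ≤ b) ∧ c ≤ y.2 ∧ y.2 ≤ d) ∧ gadj x y) (a, c) (a + n, c) := by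
    intro n
    induction n with
    | zero => intro _; simpa using Relation.ReflTransGen.refl
    | succ n ih =>
      intro h
      push_cast at h ⊢
      refine (ih (by omega)).tail ⟨⟨⟨?_, ?_⟩, ?_, ?_⟩, ?_⟩
      any_goals simp
      any_goals omega
      rw [← add_assoc]; exact gadj_h _ _
  have h2 : ∀ m : ℕ, c + m ≤ d → Relation.ReflTransGen
      (fun x y : ℤ × ℤ => ((a ≤ y.1 ∧ y.1 ≤ b) ∧ c ≤ y.2 ∧ y.2 ≤ d) ∧ gadj x y) (i, c) (i, c + m) := by
    intro n
    induction n with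
    | zero => intro _; simpa using Relation.ReflTransGen.refl
    | succ n ih =>
      intro h
      push_cast at h ⊢
      refine (ih (by omega)).tail ⟨⟨⟨?_, ?_⟩, ?_, ?_⟩, ?_⟩
      any_goals simp
      any_goals omega
      rw [← add_assoc]; exact gadj_v _ _
  have e1 := h1 (i - a).toNat (by omega)
  have e2 := h2 (j - c).toNat (by omega)
  rw [show a + ((i - a).toNat : ℤ) = i by omega] at e1
  rw [show c + ((j - c).toNat : ℤ) = j by omega] at e2
  exact e1.trans e2

lemma ev_le (k a : ℝ) (hk : 0 < k) (ha : 0 < a) : ∀ᶠ r in nhdsWithin (0 : ℝ) (Set.Ioi 0), k * r ≤ a := by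
  filter_upwards [Ioo_mem_nhdsGT (show (0 : ℝ) < a / k by positivity)] with r hr
  have := hr.2.le
  rw [le_div_iff₀ hk] at this
  linarith

lemma ev_imp {P : Prop} {Q : ℝ → Prop} (h : P → ∀ᶠ r in nhdsWithin (0 : ℝ) (Set.Ioi 0), Q r) :
    ∀ᶠ r in nhdsWithin (0 : ℝ) (Set.Ioi 0), P → Q r := by
  by_cases hP : P
  · filter_upwards [h hP] with r hr _ using hr
  · exact Filter.Eventually.of_forall fun r h => absurd h hP

lemma floor_close {a b : ℝ} (h : |a - b| < 1) : ⌊a⌋ = ⌊b⌋ ∨ ⌊a⌋ = ⌊b⌋ + 1 ∨ ⌊b⌋ = ⌊a⌋ + 1 := by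
  have h1 := Int.floor_le a
  have h2 := Int.floor_le b
  have h3 := Int.lt_floor_add_one a
  have h4 := Int.lt_floor_add_one b
  rw [abs_lt] at h
  have : ⌊a⌋ < ⌊b⌋ + 2 := by
    have : (⌊a⌋ : ℝ) < ⌊b⌋ + 2 := by linarith
    exact_mod_cast this
  have : ⌊b⌋ < ⌊a⌋ + 2 := by
    have : (⌊b⌋ : ℝ) < ⌊a⌋ + 2 := by linarith
    exact_mod_cast this
  omega

def near (ε : ℝ) (z : ℤ × ℤ) (p : ℝ × ℝ) (R : ℝ) : Prop :=
  |z.1 * ε - p.1| ≤ R ∧ |z.2 * ε - p.2| ≤ R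

lemma near_dist {ε : ℝ} {z : ℤ × ℤ} {p p' : ℝ × ℝ} {R R' : ℝ} (h : near ε z p R) (h' : near ε z p' R') :
    dist p p' ≤ R + R' := by
  rw [Prod.dist_eq, Real.dist_eq, Real.dist_eq, max_le_iff]
  obtain ⟨a, b⟩ := h
  obtain ⟨a', b'⟩ := h'
  rw [abs_le] at a b a' b'
  constructor <;> rw [abs_le] <;> constructor <;> linarith

lemma near_of_dist {ε : ℝ} {z : ℤ × ℤ} {p p' : ℝ × ℝ} {R D : ℝ} (h : near ε z p R) (h' : dist p p' ≤ D) :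
    near ε z p' (R + D) := by
  rw [Prod.dist_eq, Real.dist_eq, Real.dist_eq, max_le_iff] at h'
  obtain ⟨a, b⟩ := h
  obtain ⟨a', b'⟩ := h'
  rw [abs_le] at *
  constructor <;> rw [abs_le] <;> constructor <;> linarith

def cell (ε : ℝ) (p : ℝ × ℝ) : ℤ × ℤ := (⌊p.1 / ε⌋, ⌊p.2 / ε⌋)

lemma floor_near {ε : ℝ} (hε : 0 < ε) (a : ℝ) : |⌊a / ε⌋ * ε - a| ≤ ε := by
  have h1 := Int.floor_le (a / ε)
  have h2 := Int.lt_floor_add_one (a / ε)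
  rw [le_div_iff₀ hε] at h1
  rw [div_lt_iff₀ hε] at h2
  rw [abs_le]; constructor <;> linarith

/-- grid path along an arc -/
lemma arc_path (γ : unitInterval → ℝ × ℝ) (hγ : Continuous γ) (ε : ℝ) (hε : 0 < ε) :
    ∃ (n : ℕ) (x : ℕ → ℤ × ℤ), near ε (x 0) (γ 0) ε ∧ near ε (x n) (γ 1) ε ∧
      (∀ k, x k = x (k + 1) ∨ gadj (x k) (x (k + 1))) ∧
      ∀ k, ∃ t, near ε (x k) (γ t) (2 * ε) := by
  obtain ⟨η, hη, hu⟩ := Metric.uniformContinuous_iff.1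
    (CompactSpace.uniformContinuous_of_continuous hγ) ε hε
  obtain ⟨N, hN⟩ := exists_nat_gt (1 / η)
  have hN0 : (0 : ℝ) < N := lt_trans (by positivity) hN
  let τ : ℕ → unitInterval := fun i => Set.projIcc 0 1 zero_le_one ((i : ℝ) / N)
  let p : ℕ → ℝ × ℝ := fun i => γ (τ i)
  have hstep : ∀ i, dist (p i) (p (i + 1)) < ε := by
    intro i
    apply hu
    have := (LipschitzWith.projIcc (zero_le_one (α := ℝ))).dist_le_mul ((i : ℝ) / N) (((i + 1 : ℕ) : ℝ) / N)
    refine lt_of_le_of_lt this ?_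
    rw [Real.dist_eq]
    push_cast
    rw [show (i : ℝ) / N - (i + 1) / N = - (1 / N) by ring, abs_neg, abs_of_pos (by positivity), one_mul]
    rw [div_lt_iff₀ hη] at hN
    rw [div_lt_iff₀ hN0]; linarith
  have hstep1 : ∀ i, |(p i).1 - (p (i+1)).1| < ε := fun i => by
    have := hstep i
    rw [Prod.dist_eq, max_lt_iff] at this; exact this.1
  have hstep2 : ∀ i, |(p i).2 - (p (i+1)).2| < ε := fun i => by
    have := hstep i
    rw [Prod.dist_eq, max_lt_iff] at this; exact this.2
  have hdiv : ∀ a b : ℝ, |a - b| < ε → |a / ε - b / ε| < 1 := by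
    intro a b h
    rw [← sub_div, abs_div, abs_of_pos hε, div_lt_one hε]; exact h
  have hp0 : p 0 = γ 0 := by
    simp only [p, τ]; congr 1; simp
  have hpN : p N = γ 1 := by
    simp only [p, τ]; congr 1; rw [div_self hN0.ne']; simp
  refine ⟨2 * N, fun k => (⌊(p ((k + 1) / 2)).1 / ε⌋, ⌊(p (k / 2)).2 / ε⌋), ?_, ?_, ?_, ?_⟩
  · constructor
    · simp only [show (0 + 1) / 2 = 0 by norm_num, hp0]; exact floor_near hε _
    · simp only [show 0 / 2 = 0 by norm_num, hp0]; exact floor_near hε _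
  · constructor
    · simp only [show (2 * N + 1) / 2 = N by omega, hpN]; exact floor_near hε _
    · simp only [show (2 * N) / 2 = N by omega, hpN]; exact floor_near hε _
  · intro k
    obtain ⟨i, rfl | rfl⟩ : ∃ i, k = 2 * i ∨ k = 2 * i + 1 := ⟨k / 2, by omega⟩
    · simp only [show (2 * i + 1) / 2 = i by omega, show (2 * i) / 2 = i by omega,
        show (2 * i + 1 + 1) / 2 = i + 1 by omega]
      rcases floor_close (hdiv _ _ (hstep1 i)) with h | h | h
      · left; rw [h]
      · right; rw [h]; exact gadj_symm (gadj_h _ _)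
      · right; rw [h]; exact gadj_h _ _
    · simp only [show (2 * i + 1) / 2 = i by omega, show (2 * i + 1 + 1 + 1) / 2 = i + 1 by omega,
        show (2 * i + 1 + 1) / 2 = i + 1 by omega]
      rcases floor_close (hdiv _ _ (hstep2 i)) with h | h | h
      · left; rw [h]
      · right; rw [h]; exact gadj_symm (gadj_v _ _)
      · right; rw [h]; exact gadj_v _ _
  · intro k
    refine ⟨τ (k / 2), ?_, ?_⟩
    · change |_ - (p (k/2)).1| ≤ _
      have h1 := floor_near hε (p ((k+1)/2)).1
      have h2 : |(p (k/2)).1 - (p ((k+1)/2)).1| ≤ ε := by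
        rcases (by omega : (k+1)/2 = k/2 ∨ (k+1)/2 = k/2+1) with h | h <;> rw [h]
        · simp [hε.le]
        · exact (hstep1 _).le
      simp only
      rw [abs_le] at *
      constructor <;> linarith
    · change |_ - (p (k/2)).2| ≤ _
      have := floor_near hε (p (k/2)).2
      simp only
      linarith

lemma planar_grid {V : Type*} [Fintype V] (G : SimpleGraph V) (hG : G.IsPlanar) (A B : Finset V)
    (hAB : Disjoint A B) : ∃ c : V → Finset (ℤ × ℤ),
    (∀ u ∈ A ∪ B, ∀ v ∈ A ∪ B, ∀ x, x ∈ c u → x ∈ c v → u = v) ∧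
    (∀ u ∈ A ∪ B, ∃ r ∈ c u, ∀ x ∈ c u,
      Relation.ReflTransGen (fun x y => y ∈ c u ∧ gadj x y) r x) ∧
    (∀ a ∈ A, ∀ b ∈ B, G.Adj a b → ∃ x ∈ c a, ∃ y ∈ c b, gadj x y) := by
  obtain ⟨pos, γ, hpos, hγ, -, hint, hcross⟩ := hG
  have hd : ∀ a ∈ A, ∀ b ∈ B, a ≠ b := fun a ha b hb h =>
    Finset.disjoint_left.1 hAB ha (h ▸ hb)
  obtain ⟨r, ⟨hr1, hr2⟩, hr0⟩ : ∃ r : ℝ, ((∀ u v, u ≠ v → 6 * r ≤ dist (pos u) (pos v)) ∧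
      (∀ u v (h : G.Adj u v) w, w ≠ u → w ≠ v → ∀ t, 6 * r ≤ dist (pos w) (γ h t))) ∧ 0 < r := by
    refine Filter.Eventually.exists (f := nhdsWithin (0 : ℝ) (Set.Ioi 0)) ?_
    refine Filter.Eventually.and (Filter.Eventually.and ?_ ?_) self_mem_nhdsWithin
    · simp only [Filter.eventually_all]
      intro u v
      exact fun h => ev_le 6 _ (by norm_num) (dist_pos.2 (hpos.ne h))
    · rw [Filter.eventually_all]; intro u
      rw [Filter.eventually_all]; intro v
      rw [Filter.eventually_all]; intro h
      rw [Filter.eventually_all]; intro w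
      refine ev_imp fun hu => ev_imp fun hv => ?_
      obtain ⟨a, ha, hat⟩ := isCompact_univ.exists_forall_le' (f := fun t => dist (pos w) (γ h t)) (a := 0)
        ((continuous_const.dist (hγ h).1).continuousOn) (by
          intro t _
          rw [dist_pos]
          intro heq
          by_cases h0 : t = 0
          · rw [h0, (hγ h).2.2.1] at heq; exact hu (hpos heq)
          · by_cases h1 : t = 1
            · rw [h1, (hγ h).2.2.2] at heq; exact hv (hpos heq)
            · exact hint h t h0 h1 w heq.symm)
      filter_upwards [ev_le 6 a (by norm_num) ha] with r hr t
      exact hr.trans (hat t (Set.mem_univ _))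
  obtain ⟨δ, hδ, hδ0⟩ : ∃ δ : ℝ, (∀ u v (h : G.Adj u v) u' v' (h' : G.Adj u' v'),
      s(u, v) ≠ s(u', v') → ∀ t t', r ≤ dist (γ h t) (pos u) → r ≤ dist (γ h t) (pos v) →
        1 * δ ≤ dist (γ h t) (γ h' t')) ∧ 0 < δ := by
    refine Filter.Eventually.exists (f := nhdsWithin (0 : ℝ) (Set.Ioi 0)) ?_
    refine Filter.Eventually.and ?_ self_mem_nhdsWithin
    rw [Filter.eventually_all]; intro u
    rw [Filter.eventually_all]; intro v
    rw [Filter.eventually_all]; intro h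
    rw [Filter.eventually_all]; intro u'
    rw [Filter.eventually_all]; intro v'
    rw [Filter.eventually_all]; intro h'
    refine ev_imp fun hne => ?_
    let K : Set (unitInterval × unitInterval) :=
      {p | r ≤ dist (γ h p.1) (pos u) ∧ r ≤ dist (γ h p.1) (pos v)}
    have hc1 : Continuous fun p : unitInterval × unitInterval => γ h p.1 := (hγ h).1.comp continuous_fst
    have hc2 : Continuous fun p : unitInterval × unitInterval => γ h' p.2 := (hγ h').1.comp continuous_snd
    have hK : IsCompact K := by
      apply IsClosed.isCompact
      exact (isClosed_le continuous_const (hc1.dist continuous_const)).inter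
        (isClosed_le continuous_const (hc1.dist continuous_const))
    obtain ⟨a, ha, hat⟩ := hK.exists_forall_le' (f := fun p => dist (γ h p.1) (γ h' p.2)) (a := 0)
      (hc1.dist hc2).continuousOn (by
        rintro ⟨t, t'⟩ ⟨k1, k2⟩
        rw [dist_pos]
        intro heq
        rcases hcross h h' t t' hne heq with h0 | h0
        · simp only at k1
          rw [h0, (hγ h).2.2.1, dist_self] at k1; linarith
        · simp only at k2
          rw [h0, (hγ h).2.2.2, dist_self] at k2; linarith)
    filter_upwards [ev_le 1 a (by norm_num) ha] with d hd t t' k1 k2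
    exact hd.trans (hat (t, t') ⟨k1, k2⟩)
  let ε := min r δ / 10
  have hε0 : 0 < ε := by
    have := lt_min hr0 hδ0
    simp only [ε]; linarith
  have hεr : 10 * ε ≤ r := by
    have := min_le_left r δ
    simp only [ε]; linarith
  have hεδ : 10 * ε ≤ δ := by
    have := min_le_right r δ
    simp only [ε]; linarith
  clear_value ε
  let S : V → Finset (ℤ × ℤ) := fun u =>
    Finset.Icc ⌈((pos u).1 - 2 * r) / ε⌉ ⌊((pos u).1 + 2 * r) / ε⌋ ×ˢ
    Finset.Icc ⌈((pos u).2 - 2 * r) / ε⌉ ⌊((pos u).2 + 2 * r) / ε⌋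
  have hS : ∀ u z, z ∈ S u ↔ near ε z (pos u) (2 * r) := by
    intro u z
    simp only [S, Finset.mem_product, Finset.mem_Icc, Int.ceil_le, Int.le_floor, near, abs_le,
      div_le_iff₀ hε0, le_div_iff₀ hε0]
    constructor
    · rintro ⟨⟨a, b⟩, c, d⟩
      refine ⟨⟨?_, ?_⟩, ?_, ?_⟩ <;> linarith
    · rintro ⟨⟨a, b⟩, c, d⟩
      refine ⟨⟨?_, ?_⟩, ?_, ?_⟩ <;> linarith
  have hSd : ∀ u v z, z ∈ S u → z ∈ S v → u = v := by
    intro u v z h1 h2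
    by_contra hne
    have := near_dist ((hS _ _).1 h1) ((hS _ _).1 h2)
    have := hr1 u v hne
    linarith
  have hSne : ∀ u z, near ε z (pos u) ε → z ∈ S u := by
    intro u z h
    rw [hS]
    exact ⟨h.1.trans (by linarith), h.2.trans (by linarith)⟩
  have hQ : ∀ u v, ∃ Q : Finset (ℤ × ℤ), ∀ h : G.Adj u v, (∀ z ∈ Q, z ∉ S v) ∧
      (∀ z ∈ Q, ∃ t, near ε z (γ h t) (2 * ε)) ∧
      (∀ z ∈ Q, ∃ s ∈ S u, Relation.ReflTransGen (fun x y => y ∈ S u ∪ Q ∧ gadj x y) s z) ∧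
      (∃ x ∈ S u ∪ Q, ∃ y ∈ S v, gadj x y) := by
    intro u v
    by_cases h : G.Adj u v
    swap
    · exact ⟨∅, fun h' => absurd h' h⟩
    obtain ⟨n, x, hx0, hxn, hxs, hxt⟩ := arc_path (γ h) (hγ h).1 ε hε0
    rw [(hγ h).2.2.1] at hx0
    rw [(hγ h).2.2.2] at hxn
    have hex : ∃ n, x n ∈ S v := ⟨n, hSne _ _ hxn⟩
    have hm := Nat.find_spec hex
    have hmin : ∀ k, k < Nat.find hex → x k ∉ S v := fun k hk => Nat.find_min hex hk
    generalize Nat.find hex = m at hm hmin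
    have hx0' := hSne _ _ hx0
    have hm0 : m ≠ 0 := by
      rintro rfl
      exact h.ne (hSd _ _ _ hx0' hm)
    have hmem : ∀ k, k < m → x k ∈ (Finset.range m).image x := fun k hk =>
      Finset.mem_image_of_mem _ (Finset.mem_range.2 hk)
    refine ⟨(Finset.range m).image x, fun _ => ⟨?_, ?_, ?_, ?_⟩⟩
    · intro z hz
      obtain ⟨k, hk, rfl⟩ := Finset.mem_image.1 hz
      exact hmin k (Finset.mem_range.1 hk)
    · intro z hz
      obtain ⟨k, hk, rfl⟩ := Finset.mem_image.1 hz
      exact hxt k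
    · intro z hz
      obtain ⟨k, hk, rfl⟩ := Finset.mem_image.1 hz
      refine ⟨x 0, hx0', ?_⟩
      have hk := Finset.mem_range.1 hk
      clear hz
      induction k with
      | zero => exact Relation.ReflTransGen.refl
      | succ k ih =>
        have := ih (Finset.mem_range.2 (by omega)) (by omega)
        rcases hxs k with e | e
        · rw [← e]; exact this
        · exact this.tail ⟨Finset.mem_union_right _ (hmem _ hk), e⟩
    · refine ⟨x (m - 1), Finset.mem_union_right _ (hmem _ (by omega)), x m, hm, ?_⟩
      have := hxs (m - 1)
      rw [show m - 1 + 1 = m by omega] at this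
      rcases this with e | e
      · exact absurd (e ▸ hm) (hmin (m - 1) (by omega))
      · exact e
  choose Q hQ using hQ
  let c : V → Finset (ℤ × ℤ) := fun u => S u ∪
    if u ∈ A then (B.filter (fun v => G.Adj u v)).biUnion (Q u) else ∅
  have hc : ∀ u z, z ∈ c u ↔ z ∈ S u ∨ (u ∈ A ∧ ∃ v ∈ B, G.Adj u v ∧ z ∈ Q u v) := by
    intro u z
    simp only [c, Finset.mem_union]
    split_ifs with h
    · simp [h, and_assoc]
    · simp [h]
  have hSQ : ∀ w u v, G.Adj u v → w ≠ u → ∀ z, z ∈ S w → z ∉ Q u v := by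
    intro w u v h hwu z hz hzq
    by_cases hwv : w = v
    · subst hwv; exact (hQ _ _ h).1 z hzq hz
    · obtain ⟨t, ht⟩ := (hQ _ _ h).2.1 z hzq
      have := near_dist ((hS _ _).1 hz) ht
      have := hr2 u v h w hwu hwv t
      linarith
  refine ⟨c, ?_, ?_, ?_⟩
  · intro u hu v hv z hzu hzv
    by_contra hne
    rw [hc] at hzu hzv
    rcases hzu with hzu | ⟨huA, w, hw, huw, hzu⟩ <;> rcases hzv with hzv | ⟨hvA, w', hw', hvw', hzv⟩
    · exact hne (hSd _ _ _ hzu hzv)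
    · exact hSQ u v w' hvw' hne z hzu hzv
    · exact hSQ v u w huw (Ne.symm hne) z hzv hzu
    · obtain ⟨t, ht⟩ := (hQ _ _ huw).2.1 z hzu
      obtain ⟨t', ht'⟩ := (hQ _ _ hvw').2.1 z hzv
      have far : ∀ x, z ∉ S x → r ≤ dist (γ huw t) (pos x) := by
        intro x hx
        by_contra! hlt
        apply hx
        rw [hS]
        have := near_of_dist ht hlt.le
        exact ⟨this.1.trans (by linarith), this.2.trans (by linarith)⟩
      have := hδ u w huw v w' hvw' (by
        intro he
        rw [Sym2.eq_iff] at he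
        rcases he with ⟨e, -⟩ | ⟨e, -⟩
        · exact hne e
        · exact hd _ huA _ hw' e) t t'
        (far u (fun h => hSQ u v w' hvw' hne z h hzv)) (far w ((hQ _ _ huw).1 z hzu))
      have := near_dist ht ht'
      linarith
  · intro u hu
    have h0 := hSne u (cell ε (pos u)) ⟨floor_near hε0 _, floor_near hε0 _⟩
    have hroot := fun z hz => box_conn _ _ _ _ z (show z ∈ S u from hz)
    have hSc : ∀ z, z ∈ S u → z ∈ c u := fun z hz => (hc _ _).2 (Or.inl hz)
    have hSr : ∀ z ∈ S u, Relation.ReflTransGen (fun x y => y ∈ c u ∧ gadj x y) _ z := fun z hz =>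
      Relation.ReflTransGen.mono (fun x y h => ⟨hSc _ h.1, h.2⟩) _ _ (hroot z hz).2
    refine ⟨_, hSc _ (hroot _ h0).1, fun z hz => ?_⟩
    rcases (hc _ _).1 hz with hz | ⟨huA, w, hw, huw, hzu⟩
    · exact hSr z hz
    · obtain ⟨s, hs, hp⟩ := (hQ _ _ huw).2.2.1 z hzu
      refine (hSr s hs).trans (Relation.ReflTransGen.mono (fun x y h => ⟨?_, h.2⟩) _ _ hp)
      rcases Finset.mem_union.1 h.1 with h | h
      · exact hSc _ h
      · exact (hc _ _).2 (Or.inr ⟨huA, w, hw, huw, h⟩)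
  · intro a ha b hb hab
    obtain ⟨x, hx, y, hy, hxy⟩ := (hQ _ _ hab).2.2.2
    refine ⟨x, ?_, y, (hc _ _).2 (Or.inl hy), hxy⟩
    rcases Finset.mem_union.1 hx with h | h
    · exact (hc _ _).2 (Or.inl h)
    · exact (hc _ _).2 (Or.inr ⟨ha, b, hb, hab, h⟩)
lemma matching_card {V : Type*} [Fintype V] {G : SimpleGraph V} (M : G.Subgraph) (hM : M.IsMatching) :
    M.verts.ncard = 2 * M.edgeSet.ncard := by
  have h := M.spanningCoe.sum_degrees_eq_twice_card_edges
  have h1 : ∀ v, M.spanningCoe.degree v = if v ∈ M.verts then 1 else 0 := by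
    intro v
    split_ifs with hv
    · obtain ⟨w, hw, hu⟩ := hM hv
      rw [SimpleGraph.degree, Finset.card_eq_one]
      refine ⟨w, ?_⟩
      ext x
      simp only [SimpleGraph.mem_neighborFinset, SimpleGraph.Subgraph.spanningCoe_adj,
        Finset.mem_singleton]
      exact ⟨fun h => hu x h, fun h => h ▸ hw⟩
    · rw [SimpleGraph.degree, Finset.card_eq_zero]
      ext x
      simp only [SimpleGraph.mem_neighborFinset, SimpleGraph.Subgraph.spanningCoe_adj,
        Finset.notMem_empty, iff_false]
      exact fun h => hv h.fst_mem
  simp only [h1] at h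
  have e1 : M.verts.ncard = (Finset.univ.filter (fun v => v ∈ M.verts)).card := by
    rw [← Set.ncard_coe_finset]; congr 1; ext; simp
  have e2 : M.edgeSet.ncard = M.spanningCoe.edgeFinset.card := by
    rw [← Set.ncard_coe_finset]; congr 1; ext; simp
  rw [e1, e2, ← h, Finset.card_filter]

def joinG {V : Type*} (G : SimpleGraph V) (d : ℕ) : SimpleGraph (V ⊕ Fin d) where
  Adj x y := x ≠ y ∧ ∀ u v, x = Sum.inl u → y = Sum.inl v → G.Adj u v
  symm := ⟨fun x y h => ⟨h.1.symm, fun u v hu hv => (h.2 v u hv hu).symm⟩⟩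
  loopless := ⟨fun x h => h.1 rfl⟩

lemma joinG_inl {V : Type*} (G : SimpleGraph V) (d : ℕ) (u v : V) :
    (joinG G d).Adj (Sum.inl u) (Sum.inl v) ↔ G.Adj u v := by
  constructor
  · intro h; exact h.2 u v rfl rfl
  · intro h
    refine ⟨fun e => h.ne (Sum.inl_injective e), ?_⟩
    rintro a b ha hb
    rw [← Sum.inl_injective ha, ← Sum.inl_injective hb]; exact h

lemma restrict_matching {V : Type*} [Fintype V] (G : SimpleGraph V) (d : ℕ)
    (M' : (joinG G d).Subgraph) (hM' : M'.IsPerfectMatching) :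
    ∃ M : G.Subgraph, M.IsMatching ∧ Fintype.card V ≤ M.verts.ncard + d := by
  let M : G.Subgraph :=
    { verts := {v | ∃ w, M'.Adj (Sum.inl v) (Sum.inl w)}
      Adj := fun u v => M'.Adj (Sum.inl u) (Sum.inl v)
      adj_sub := fun h => (joinG_inl G d _ _).1 h.adj_sub
      edge_vert := fun h => ⟨_, h⟩
      symm := ⟨fun u v h => h.symm⟩ }
  refine ⟨M, ?_, ?_⟩
  · rintro v ⟨w, hw⟩
    refine ⟨w, hw, fun y hy => ?_⟩
    exact Sum.inl_injective (hM'.1.eq_of_adj_left hy hw)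
  · have hp : ∀ v : V, ∃ x, M'.Adj (Sum.inl v) x := fun v =>
      (hM'.1 (hM'.2 (Sum.inl v))).exists
    have hq : ∀ v : (M.vertsᶜ : Set V), ∃ i : Fin d, M'.Adj (Sum.inl v.1) (Sum.inr i) := by
      rintro ⟨v, hv⟩
      obtain ⟨x, hx⟩ := hp v
      cases x with
      | inl w => exact absurd ⟨w, hx⟩ hv
      | inr i => exact ⟨i, hx⟩
    choose f hf using hq
    have hinj : Function.Injective f := by
      intro a b hab
      have h1 := hf a
      have h2 := hf b
      rw [hab] at h1
      exact Subtype.ext (Sum.inl_injective (hM'.1.eq_of_adj_right h1 h2))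
    have := Nat.card_le_card_of_injective f hinj
    rw [Nat.card_eq_fintype_card (α := Fin d), Fintype.card_fin, Nat.card_coe_set_eq] at this
    have h2 := Set.ncard_add_ncard_compl M.verts
    rw [Nat.card_eq_fintype_card] at h2
    omega

def iso {V : Type*} [Fintype V] (G : SimpleGraph V) (S : Finset V) : Finset V :=
  Finset.univ.filter (fun v => v ∉ S ∧ ∀ w, G.Adj v w → w ∈ S)

lemma tutte_berge {V : Type*} [Fintype V] (G : SimpleGraph V) : ∃ M : G.Subgraph, M.IsMatching ∧
    (∀ M' : G.Subgraph, M'.IsMatching → M'.edgeSet.ncard ≤ M.edgeSet.ncard) ∧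
    (Fintype.card V ≤ 2 * M.edgeSet.ncard + 1 ∨
      ∃ S : Finset V, 4 * S.card + 2 * Fintype.card V ≤ 6 * M.edgeSet.ncard + 2 * (iso G S).card) := by
  obtain ⟨M, hM, hmax⟩ : ∃ M : G.Subgraph, M.IsMatching ∧
      ∀ M' : G.Subgraph, M'.IsMatching → M'.edgeSet.ncard ≤ M.edgeSet.ncard := by
    have hfin : (Set.univ : Set G.Subgraph).Finite := Set.toFinite _
    obtain ⟨M, hM, h⟩ := Set.exists_max_image {M : G.Subgraph | M.IsMatching}
      (fun M => M.edgeSet.ncard) (Set.toFinite _) ⟨⊥, by intro v hv; simp at hv⟩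
    exact ⟨M, hM, h⟩
  refine ⟨M, hM, hmax, ?_⟩
  by_cases hk : Fintype.card V ≤ 2 * M.edgeSet.ncard + 1
  · exact Or.inl hk
  right
  obtain ⟨d, hd⟩ : ∃ d, Fintype.card V = 2 * M.edgeSet.ncard + 2 + d :=
    ⟨Fintype.card V - (2 * M.edgeSet.ncard + 2), by omega⟩
  have hno : ¬ ∃ M' : (joinG G d).Subgraph, M'.IsPerfectMatching := by
    rintro ⟨M', hM'⟩
    obtain ⟨N, hN, hN'⟩ := restrict_matching G d M' hM'
    have := hmax N hN
    have := matching_card N hN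
    omega
  rw [SimpleGraph.tutte] at hno
  push Not at hno
  obtain ⟨u, hu⟩ := hno
  unfold SimpleGraph.IsTutteViolator at hu
  have hodd := ((⊤ : (joinG G d).Subgraph).deleteVerts u).coe.odd_ncard_oddComponents
  have hverts : ((⊤ : (joinG G d).Subgraph).deleteVerts u).verts = uᶜ := by
    ext; simp
  have hadj : ∀ x y : ((⊤ : (joinG G d).Subgraph).deleteVerts u).verts,
      ((⊤ : (joinG G d).Subgraph).deleteVerts u).coe.Adj x y ↔ (joinG G d).Adj x.1 y.1 := by
    rintro ⟨x, hx⟩ ⟨y, hy⟩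
    rw [hverts] at hx hy
    simp only [SimpleGraph.Subgraph.coe_adj, SimpleGraph.Subgraph.deleteVerts_adj]
    simp
    exact ⟨fun h => h.2.2, fun h => ⟨hx, hy, h⟩⟩
  have hcard : Nat.card ((⊤ : (joinG G d).Subgraph).deleteVerts u).verts + u.ncard = Fintype.card V + d := by
    rw [Nat.card_coe_set_eq, hverts]
    have := Set.ncard_add_ncard_compl u
    rw [Nat.card_eq_fintype_card, Fintype.card_sum, Fintype.card_fin] at this
    omega
  generalize hH : ((⊤ : (joinG G d).Subgraph).deleteVerts u).coe = H at hu hodd hadj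
  have hge : u.ncard + 2 ≤ H.oddComponents.ncard := by
    rcases Nat.even_or_odd (H.oddComponents.ncard) with he | ho
    · have := hodd.not.1 (Nat.not_odd_iff_even.2 he)
      rw [Nat.not_odd_iff_even] at this
      rw [Nat.even_iff] at he this
      omega
    · have := hodd.1 ho
      rw [Nat.odd_iff] at ho this
      omega
  have hinr : ∀ i : Fin d, Sum.inr i ∈ u := by
    intro i
    by_contra hi
    have hi' : (Sum.inr i : V ⊕ Fin d) ∈ ((⊤ : (joinG G d).Subgraph).deleteVerts u).verts := by
      rw [hverts]; exact hi
    have hone : ∀ c : H.ConnectedComponent, c = H.connectedComponentMk ⟨_, hi'⟩ := by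
      intro c
      induction c using SimpleGraph.ConnectedComponent.ind with
      | h x =>
        rw [SimpleGraph.ConnectedComponent.eq]
        by_cases hx : x.1 = Sum.inr i
        · have : x = ⟨_, hi'⟩ := Subtype.ext hx
          rw [this]
        · refine SimpleGraph.Adj.reachable ?_
          rw [hadj]
          exact ⟨hx, fun _ _ _ h => by simp at h⟩
    have : H.oddComponents.ncard ≤ 1 := by
      rw [Set.ncard_le_one]
      intro a _ b _
      rw [hone a, hone b]
    omega
  let S : Finset V := Finset.univ.filter (fun v => Sum.inl v ∈ u)
  have hSu : u.ncard = S.card + d := by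
    have : u = ((S.image Sum.inl ∪ Finset.univ.image Sum.inr : Finset (V ⊕ Fin d)) : Set (V ⊕ Fin d)) := by
      ext x
      cases x with
      | inl v => simp [S]
      | inr i => simp [hinr i]
    rw [this, Set.ncard_coe_finset, Finset.card_union_of_disjoint, Finset.card_image_of_injective _ Sum.inl_injective,
      Finset.card_image_of_injective _ Sum.inr_injective, Finset.card_univ, Fintype.card_fin]
    rw [Finset.disjoint_left]
    simp
  refine ⟨S, ?_⟩
  let O : Finset H.ConnectedComponent := Finset.univ.filter (fun c => Odd c.supp.ncard)
  have hO : H.oddComponents.ncard = O.card := by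
    rw [← Set.ncard_coe_finset]; congr 1; ext; simp [O]
  have hsum : ∑ c : H.ConnectedComponent, c.supp.ncard =
      Nat.card ((⊤ : (joinG G d).Subgraph).deleteVerts u).verts := by
    rw [Nat.card_eq_fintype_card, ← Finset.card_univ,
      Finset.card_eq_sum_card_fiberwise (f := H.connectedComponentMk) (t := Finset.univ) (by intro x _; simp)]
    refine Finset.sum_congr rfl fun c _ => ?_
    rw [← Set.ncard_coe_finset]; congr 1; ext x; simp
  have hO3 : 3 * O.card ≤ ∑ c ∈ O, c.supp.ncard + 2 * (O.filter (fun c => c.supp.ncard = 1)).card := by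
    have h0 : (O.filter (fun c => c.supp.ncard = 1)).card =
        ∑ c ∈ O, if c.supp.ncard = 1 then 1 else 0 := Finset.card_filter _ _
    rw [h0, Finset.mul_sum, ← Finset.sum_add_distrib, mul_comm, ← smul_eq_mul]
    refine Finset.card_nsmul_le_sum _ _ _ fun c hc => ?_
    have : Odd c.supp.ncard := (Finset.mem_filter.1 hc).2
    rw [Nat.odd_iff] at this
    split_ifs <;> omega
  have hle : ∑ c ∈ O, c.supp.ncard ≤ ∑ c : H.ConnectedComponent, c.supp.ncard :=
    Finset.sum_le_sum_of_subset (Finset.subset_univ _)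
  have hI : (O.filter (fun c => c.supp.ncard = 1)).card ≤ (iso G S).card := by
    have hv : ∀ c ∈ O.filter (fun c => c.supp.ncard = 1), ∃ v : V, v ∈ iso G S ∧
        ∃ h : Sum.inl v ∈ ((⊤ : (joinG G d).Subgraph).deleteVerts u).verts,
          H.connectedComponentMk ⟨Sum.inl v, h⟩ = c := by
      intro c hc
      obtain ⟨⟨x, hx⟩, hcx⟩ := Set.ncard_eq_one.1 (Finset.mem_filter.1 hc).2
      have hxu : x ∉ u := by rw [hverts] at hx; exact hx
      cases x with
      | inr i => exact absurd (hinr i) hxu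
      | inl v =>
        have hmk : H.connectedComponentMk ⟨Sum.inl v, hx⟩ = c := by
          have : (⟨Sum.inl v, hx⟩ : ((⊤ : (joinG G d).Subgraph).deleteVerts u).verts) ∈ c.supp := by
            rw [hcx]; rfl
          exact this
        refine ⟨v, ?_, hx, hmk⟩
        simp only [iso, Finset.mem_filter, Finset.mem_univ, true_and, S]
        refine ⟨hxu, fun w hw => ?_⟩
        by_contra hwu
        have hw' : (Sum.inl w : V ⊕ Fin d) ∈ ((⊤ : (joinG G d).Subgraph).deleteVerts u).verts := by
          rw [hverts]; exact hwu
        have ha : H.Adj ⟨Sum.inl v, hx⟩ ⟨Sum.inl w, hw'⟩ := by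
          rw [hadj]; exact (joinG_inl G d v w).2 hw
        have : (⟨Sum.inl w, hw'⟩ : ((⊤ : (joinG G d).Subgraph).deleteVerts u).verts) ∈ c.supp := by
          rw [SimpleGraph.ConnectedComponent.mem_supp_iff, ← hmk, SimpleGraph.ConnectedComponent.eq]
          exact ha.symm.reachable
        rw [hcx] at this
        have := congrArg Subtype.val this
        exact hw.ne (Sum.inl_injective this).symm
    haveI : Nonempty V := Fintype.card_pos_iff.1 (by omega)
    choose! f hf using hv
    refine Finset.card_le_card_of_injOn f (fun c hc => (hf c hc).1) ?_
    intro a ha b hb hab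
    obtain ⟨h1, e1⟩ := (hf a ha).2
    obtain ⟨h2, e2⟩ := (hf b hb).2
    rw [← e1, ← e2]
    congr 2
    rw [hab]
  omega

theorem edges_bound {V : Type*} [Fintype V] (G : SimpleGraph V) (hG : G.IsPlanar) (A B : Finset V)
    (hAB : Disjoint A B) :
    ((A ×ˢ B).filter (fun e => G.Adj e.1 e.2)).card ≤ 2 * (A.card + B.card) := by
  obtain ⟨c, h1, h2, h3⟩ := planar_grid G hG A B hAB
  refine grid_bound A B hAB _ ?_ c h1 h2 ?_
  · intro e he
    exact Finset.mem_product.1 (Finset.mem_filter.1 he).1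
  · intro e he
    have h := Finset.mem_product.1 (Finset.mem_filter.1 he).1
    exact h3 e.1 h.1 e.2 h.2 (Finset.mem_filter.1 he).2

lemma card_edges {V : Type*} [Fintype V] (G : SimpleGraph V) (A B : Finset V) :
    ((A ×ˢ B).filter (fun e => G.Adj e.1 e.2)).card = ∑ a ∈ A, (B.filter (fun b => G.Adj a b)).card := by
  rw [Finset.card_filter, Finset.sum_product]
  refine Finset.sum_congr rfl fun a _ => ?_
  rw [Finset.card_filter]

lemma card_edges' {V : Type*} [Fintype V] (G : SimpleGraph V) (A B : Finset V) :
    ∑ a ∈ A, (B.filter (fun b => G.Adj a b)).card = ∑ b ∈ B, (A.filter (fun a => G.Adj b a)).card := by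
  simp only [Finset.card_filter]
  rw [Finset.sum_comm]
  simp only [G.adj_comm]

lemma iso_bound {V : Type*} [Fintype V] (G : SimpleGraph V) (hG : G.IsPlanar) (S K : Finset V)
    (hK : ∀ v ∈ K, (∃ w, G.Adj v w ∧ G.degree w ≤ G.degree v ∧ G.degree v ≤ 2) ∨ 2 < G.degree v) :
    (iso G S ∩ K).card ≤ 2 * S.card := by
  set B := (iso G S ∩ K).filter (fun v => 2 < G.degree v) with hB
  set L := (iso G S ∩ K).filter (fun v => ¬ 2 < G.degree v) with hL
  have hBL : B.card + L.card = (iso G S ∩ K).card := Finset.card_filter_add_card_filter_not _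
  have hdis : Disjoint B L := Finset.disjoint_filter_filter_not _ _ _
  set S1 := S.filter (fun w => G.degree w ≤ 2) with hS1
  set S2 := S.filter (fun w => ¬ G.degree w ≤ 2) with hS2
  have hS : S1.card + S2.card = S.card := Finset.card_filter_add_card_filter_not _
  have hBS : Disjoint B S2 := by
    rw [Finset.disjoint_left]
    intro v hv hv2
    simp only [hB, hS2, iso, Finset.mem_filter, Finset.mem_inter] at hv hv2
    exact hv.1.1.2.1 hv2.1
  have h1 := edges_bound G hG B S2 hBS
  rw [card_edges] at h1
  have hdeg : ∀ b ∈ B, 3 ≤ (S1.filter (fun w => G.Adj b w)).card + (S2.filter (fun w => G.Adj b w)).card := by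
    intro b hb
    simp only [hB, iso, Finset.mem_filter, Finset.mem_inter] at hb
    have e : G.neighborFinset b = S1.filter (fun w => G.Adj b w) ∪ S2.filter (fun w => G.Adj b w) := by
      ext w
      simp only [SimpleGraph.mem_neighborFinset, Finset.mem_union, Finset.mem_filter, hS1, hS2]
      have := hb.1.1.2.2 w
      tauto
    have := hb.2
    rw [← SimpleGraph.card_neighborFinset_eq_degree, e] at this
    exact this.trans_le (Finset.card_union_le _ _)
  have h2 : 3 * B.card ≤ ∑ b ∈ B, (S1.filter (fun w => G.Adj b w)).card + ∑ b ∈ B, (S2.filter (fun w => G.Adj b w)).card := by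
    rw [← Finset.sum_add_distrib, mul_comm, ← smul_eq_mul]
    exact Finset.card_nsmul_le_sum _ _ _ hdeg
  have h3 : L.card ≤ ∑ b ∈ L, (S1.filter (fun w => G.Adj b w)).card := by
    rw [Finset.card_eq_sum_ones]
    refine Finset.sum_le_sum fun v hv => ?_
    simp only [hL, iso, Finset.mem_filter, Finset.mem_inter] at hv
    rw [Nat.one_le_iff_ne_zero, ← Nat.pos_iff_ne_zero, Finset.card_pos]
    rcases hK v hv.1.2 with ⟨w, hw, h, h'⟩ | h
    · refine ⟨w, ?_⟩
      simp only [hS1, Finset.mem_filter]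
      exact ⟨⟨hv.1.1.2.2 w hw, by omega⟩, hw⟩
    · exact absurd h hv.2
  rw [card_edges'] at h3
  rw [card_edges' G B S1] at h2
  have h4 : ∑ w ∈ S1, (B.filter (fun a => G.Adj w a)).card + ∑ w ∈ S1, (L.filter (fun a => G.Adj w a)).card ≤ 2 * S1.card := by
    rw [← Finset.sum_add_distrib, mul_comm, ← smul_eq_mul]
    refine Finset.sum_le_card_nsmul _ _ _ fun w hw => ?_
    have hw2 : G.degree w ≤ 2 := (Finset.mem_filter.1 hw).2
    refine le_trans ?_ hw2
    rw [← Finset.card_union_of_disjoint (Finset.disjoint_filter_filter hdis),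
      ← SimpleGraph.card_neighborFinset_eq_degree]
    refine Finset.card_le_card fun x hx => ?_
    simp only [SimpleGraph.mem_neighborFinset, Finset.mem_union, Finset.mem_filter] at hx ⊢
    tauto
  omega

theorem main {V : Type*} [Fintype V] (G : SimpleGraph V) (hG : G.IsPlanar) :
    ∃ M : G.Subgraph, M.IsMatching ∧
      ({v : V | (G.degree v ≤ 2 ∧ ∃ w, G.Adj v w ∧ G.degree w ≤ G.degree v) ∨
          2 < G.degree v} : Set V).ncard ≤ 3 * M.edgeSet.ncard := by
  obtain ⟨M, hM, hmax, h⟩ := tutte_berge G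
  refine ⟨M, hM, ?_⟩
  set K : Finset V := Finset.univ.filter (fun v => (G.degree v ≤ 2 ∧ ∃ w, G.Adj v w ∧ G.degree w ≤ G.degree v) ∨
          2 < G.degree v) with hK
  have hKe : ({v : V | (G.degree v ≤ 2 ∧ ∃ w, G.Adj v w ∧ G.degree w ≤ G.degree v) ∨
          2 < G.degree v} : Set V).ncard = K.card := by
    rw [← Set.ncard_coe_finset]; congr 1; ext; simp [hK]
  rw [hKe]
  rcases h with h | ⟨S, h⟩
  · rcases Nat.eq_zero_or_pos M.edgeSet.ncard with h0 | h0
    · suffices K = ∅ by simp [this]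
      rw [Finset.eq_empty_iff_forall_notMem]
      intro v hv
      have : ∃ w, G.Adj v w := by
        rcases (Finset.mem_filter.1 hv).2 with ⟨_, w, hw, _⟩ | h
        · exact ⟨w, hw⟩
        · exact (G.degree_pos_iff_exists_adj v).1 (by omega)
      obtain ⟨w, hw⟩ := this
      have := hmax _ (SimpleGraph.Subgraph.IsMatching.subgraphOfAdj hw)
      rw [SimpleGraph.edgeSet_subgraphOfAdj, Set.ncard_singleton] at this
      omega
    · have : K.card ≤ Fintype.card V := Finset.card_le_univ _
      omega
  · have h1 := iso_bound G hG S K (by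
      intro v hv
      rcases (Finset.mem_filter.1 hv).2 with ⟨h2, w, hw, h3⟩ | h
      · exact Or.inl ⟨w, hw, h3, h2⟩
      · exact Or.inr h)
    have h2 : K.card ≤ (iso G S ∩ K).card + ((iso G S)ᶜ).card := by
      refine le_trans (Finset.card_le_card ?_) (Finset.card_union_le _ _)
      intro x hx
      simp only [Finset.mem_union, Finset.mem_inter, Finset.mem_compl]
      tauto
    have h3 := Finset.card_add_card_compl (iso G S)
    omega

end K2P
end

/-- For a planar graph `G`, the set `K₂(G) = L₂(G) ∪ H₂(G)` — vertices of
degree at most 2 having a neighbor of degree no larger than their own,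
together with vertices of degree greater than 2 — has size at most `3ν(G)`. -/
theorem K2_le_three_matching {V : Type*} [Fintype V] (G : SimpleGraph V)
    [DecidableRel G.Adj] (hplanar : G.IsPlanar) :
    ∃ M : G.Subgraph, M.IsMatching ∧
      ({v : V | (G.degree v ≤ 2 ∧ ∃ w, G.Adj v w ∧ G.degree w ≤ G.degree v) ∨
          2 < G.degree v} : Set V).ncard ≤ 3 * M.edgeSet.ncard := by
  obtain ⟨M, hM, h⟩ := K2P.main G hplanar
  refine ⟨M, hM, ?_⟩
  convert h
end

section
/- Let t ≥ 2 and let G be a graph with arboricity at most t. Let K_t(G) = L_t(G) ∪ H_t(G), where L_t(G) is the set of locally superior vertices of degree at most t and H_t(G) is the set of vertices of degree greater than t. Then |K_t(G)| ≤ (t+1)ν(G). -/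
/-- A graph has arboricity at most `a` if its edge set can be covered by `a`
forests. -/
def SimpleGraph.ArboricityLE {V : Type*} (G : SimpleGraph V) (a : ℕ) : Prop :=
  ∃ F : Fin a → SimpleGraph V, (∀ i, F i ≤ G) ∧ (∀ i, (F i).IsAcyclic) ∧
    ∀ u v : V, G.Adj u v → ∃ i, (F i).Adj u v

open Finset in
theorem aux_forest_card {V : Type*} [Fintype V] (F : SimpleGraph V) (h : F.IsAcyclic) :
    F.edgeSet.ncard ≤ Fintype.card V := by
  classical
  rcases isEmpty_or_nonempty V with hV | hV
  · have : F.edgeSet = ∅ := by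
      ext e
      induction e with
      | _ a b => exact (hV.false a).elim
    simp [this]
  · obtain ⟨T, hFT, hT⟩ := SimpleGraph.exists_maximal_isAcyclic_of_le_isAcyclic (G := ⊤) le_top h
    have hT' : T.IsTree :=
      (SimpleGraph.connected_top.maximal_le_isAcyclic_iff_isTree le_top).1 hT
    have h1 := hT'.card_edgeFinset
    have h2 : F.edgeSet.ncard ≤ T.edgeSet.ncard :=
      Set.ncard_le_ncard (SimpleGraph.edgeSet_mono hFT) (Set.toFinite _)
    have h3 : T.edgeSet.ncard = T.edgeFinset.card := by
      rw [← SimpleGraph.coe_edgeFinset, Set.ncard_coe_finset]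
    omega

open Finset Classical in
theorem aux_forest_between {V : Type*} [Fintype V] (F : SimpleGraph V) (h : F.IsAcyclic)
    (B C : Finset V) (hd : Disjoint B C) :
    ((B ×ˢ C).filter (fun p => F.Adj p.1 p.2)).card ≤ B.card + C.card := by
  set S : Set V := ↑(B ∪ C) with hS
  have h1 := aux_forest_card (F.induce S) (h.induce S)
  have h2 : Fintype.card S = B.card + C.card := by
    rw [← card_union_of_disjoint hd]; simp [hS]
  rw [← h2]
  refine le_trans ?_ h1
  have h3 : ((B ×ˢ C).filter (fun p => F.Adj p.1 p.2)).card ≤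
      ((F.induce S).edgeFinset.image (Sym2.map Subtype.val)).card := by
    apply card_le_card_of_injOn (fun p => s(p.1, p.2))
    · rintro ⟨b, c⟩ hp
      simp only [coe_filter, mem_product, Set.mem_ofPred_eq] at hp
      simp only [coe_image, Set.mem_image]
      refine ⟨s(⟨b, by simp [hS, hp.1.1]⟩, ⟨c, by simp [hS, hp.1.2]⟩), ?_, by simp⟩
      simp [hp.2]
    · rintro ⟨b, c⟩ hp ⟨b', c'⟩ hp' he
      simp only [coe_filter, mem_product, Set.mem_ofPred_eq] at hp hp'
      have := disjoint_left.1 hd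
      simp only [Sym2.eq_iff] at he
      rcases he with ⟨rfl, rfl⟩ | ⟨rfl, rfl⟩
      · rfl
      · exact (this hp.1.1 hp'.1.2).elim
  refine h3.trans (card_image_le.trans ?_)
  rw [← SimpleGraph.coe_edgeFinset, Set.ncard_coe_finset]

open Finset Classical in
theorem aux_arb_between {V : Type*} [Fintype V] (G : SimpleGraph V) (t : ℕ)
    (harb : G.ArboricityLE t) (B C : Finset V) (hd : Disjoint B C) :
    ((B ×ˢ C).filter (fun p => G.Adj p.1 p.2)).card ≤ t * (B.card + C.card) := by
  obtain ⟨F, -, hF, hc⟩ := harb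
  have h1 : (B ×ˢ C).filter (fun p => G.Adj p.1 p.2) ⊆
      (univ : Finset (Fin t)).biUnion (fun i => (B ×ˢ C).filter (fun p => (F i).Adj p.1 p.2)) := by
    intro p hp
    simp only [mem_filter] at hp
    obtain ⟨i, hi⟩ := hc _ _ hp.2
    simp only [mem_biUnion, mem_filter]
    exact ⟨i, mem_univ _, hp.1, hi⟩
  refine (card_le_card h1).trans ?_
  have := card_biUnion_le_card_mul (univ : Finset (Fin t))
    (fun i => (B ×ˢ C).filter (fun p => (F i).Adj p.1 p.2)) (B.card + C.card)
    (fun i _ => aux_forest_between (F i) (hF i) B C hd)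
  simpa using this

theorem aux_matching {V : Type*} [Fintype V] (G : SimpleGraph V) (A : Finset V) (h : V → V)
    (hinj : Set.InjOn h A) (hout : ∀ a ∈ A, h a ∉ A) (hadj : ∀ a ∈ A, G.Adj a (h a)) :
    ∃ M : G.Subgraph, M.IsMatching ∧ A.card ≤ M.edgeSet.ncard := by
  let M : G.Subgraph :=
    { verts := {x | x ∈ A ∨ ∃ a ∈ A, h a = x}
      Adj := fun x y => (x ∈ A ∧ h x = y) ∨ (y ∈ A ∧ h y = x)
      adj_sub := by
        rintro x y (⟨hx, rfl⟩ | ⟨hy, rfl⟩)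
        · exact hadj x hx
        · exact (hadj y hy).symm
      edge_vert := by
        rintro x y (⟨hx, rfl⟩ | ⟨hy, rfl⟩)
        · exact Or.inl hx
        · exact Or.inr ⟨y, hy, rfl⟩
      symm := by
        constructor
        rintro x y (hx | hx)
        · exact Or.inr hx
        · exact Or.inl hx }
  refine ⟨M, ?_, ?_⟩
  · rintro v (hv | ⟨a, ha, rfl⟩)
    · refine ⟨h v, Or.inl ⟨hv, rfl⟩, ?_⟩
      rintro y (⟨_, rfl⟩ | ⟨hy, rfl⟩)
      · rfl
      · exact (hout y hy hv).elim
    · refine ⟨a, Or.inr ⟨ha, rfl⟩, ?_⟩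
      rintro y (⟨hy, -⟩ | ⟨hy, hh⟩)
      · exact (hout a ha hy).elim
      · exact hinj hy ha hh
  · rw [← Set.ncard_coe_finset]
    apply Set.ncard_le_ncard_of_injOn (fun a => s(a, h a))
    · intro a ha
      exact Or.inl ⟨ha, rfl⟩
    · intro a ha b hb hab
      simp only [Sym2.eq_iff] at hab
      rcases hab with ⟨h1, _⟩ | ⟨h1, h2⟩
      · exact h1
      · exact (hout b hb (h1 ▸ ha)).elim

open Finset in
theorem aux_third {W : Type*} [Fintype W] [DecidableEq W] (f : W → W)
    (hf : Function.Injective f) (hne : ∀ w, f w ≠ w) :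
    ∃ S : Finset W, (∀ w ∈ S, f w ∉ S) ∧ Fintype.card W ≤ 3 * S.card := by
  obtain ⟨S, hS, hmax⟩ := exists_max_image
    ((univ : Finset (Finset W)).filter (fun S => ∀ w ∈ S, f w ∉ S)) card ⟨∅, by simp⟩
  simp only [mem_filter, mem_univ, true_and] at hS hmax
  refine ⟨S, hS, ?_⟩
  have hcov : (univ : Finset W) ⊆ (S ∪ S.image f) ∪ univ.filter (fun w => f w ∈ S) := by
    intro w _
    by_contra hw
    simp only [mem_union, mem_image, mem_filter, mem_univ, true_and, not_or, not_exists,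
      not_and] at hw
    have := hmax (insert w S) (by
      intro x hx
      have := hne w
      have := hS x
      have := hw.1.2 x
      simp only [mem_insert] at hx ⊢
      grind)
    rw [card_insert_of_notMem hw.1.1] at this
    omega
  have h1 := card_le_card hcov
  have h2 := card_union_le (S ∪ S.image f) (univ.filter (fun w => f w ∈ S))
  have h3 := card_union_le S (S.image f)
  have h4 : (S.image f).card ≤ S.card := card_image_le
  have h5 : (univ.filter (fun w => f w ∈ S)).card ≤ S.card := by
    apply card_le_card_of_injOn f
    · intro x hx; simpa using hx
    · exact hf.injOn
  rw [card_univ] at h1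
  omega

open Finset Classical in
/-- Neighbourhood of a finset. -/
noncomputable def auxN {V : Type*} [Fintype V] (G : SimpleGraph V) (X : Finset V) : Finset V :=
  univ.filter (fun v => ∃ x ∈ X, G.Adj x v)

theorem mem_auxN {V : Type*} [Fintype V] (G : SimpleGraph V) (X : Finset V) (v : V) :
    v ∈ auxN G X ↔ ∃ x ∈ X, G.Adj x v := by simp [auxN]

open Finset Classical in
theorem aux_decomp {V : Type*} [Fintype V] (G : SimpleGraph V) :
    ∃ I : Finset V, Disjoint I (auxN G I) ∧
      (∃ g : V → V, Set.InjOn g (auxN G I) ∧ ∀ u ∈ auxN G I, g u ∈ I ∧ G.Adj u (g u)) ∧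
      (∃ f : {w // w ∉ I ∧ w ∉ auxN G I} → {w // w ∉ I ∧ w ∉ auxN G I},
        Function.Injective f ∧ ∀ w, G.Adj w.1 (f w).1) := by
  obtain ⟨I, hI, hmax⟩ := exists_max_image
    ((univ : Finset (Finset V)).filter (fun I => Disjoint I (auxN G I)))
    (fun I => (I.card : ℤ) - (auxN G I).card) ⟨∅, by simp⟩
  simp only [mem_filter, mem_univ, true_and] at hI hmax
  refine ⟨I, hI, ?_, ?_⟩
  · have hall := (Finset.all_card_le_biUnion_card_iff_exists_injective
      (fun u : {u // u ∈ auxN G I} => I.filter (fun v => G.Adj u.1 v))).1 ?_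
    · obtain ⟨g, hg, hg'⟩ := hall
      refine ⟨fun v => if hv : v ∈ auxN G I then g ⟨v, hv⟩ else v, ?_, ?_⟩
      · intro a ha b hb hab
        have ha' : a ∈ auxN G I := ha
        have hb' : b ∈ auxN G I := hb
        simp only [ha', hb', dite_true] at hab
        exact congrArg Subtype.val (hg hab)
      · intro u hu
        have := hg' ⟨u, hu⟩
        simp only [hu, dite_true]
        simpa using this
    · intro s
      set P := s.biUnion (fun u : {u // u ∈ auxN G I} => I.filter (fun v => G.Adj u.1 v)) with hP
      have hPI : P ⊆ I := by
        intro v hv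
        simp only [hP, mem_biUnion, mem_filter] at hv
        obtain ⟨_, _, h, _⟩ := hv
        exact h
      have hsub : auxN G (I \ P) ⊆ auxN G I \ s.map (Function.Embedding.subtype _) := by
        intro v hv
        rw [mem_auxN] at hv
        obtain ⟨x, hx, hxv⟩ := hv
        rw [mem_sdiff] at hx ⊢
        refine ⟨(mem_auxN _ _ _).2 ⟨x, hx.1, hxv⟩, fun hv => hx.2 ?_⟩
        rw [mem_map] at hv
        obtain ⟨u, hu, rfl⟩ := hv
        simp only [hP, mem_biUnion, mem_filter]
        exact ⟨u, hu, hx.1, hxv.symm⟩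
      have h1 := hmax (I \ P) (by
        refine (disjoint_of_subset_left sdiff_subset hI).mono_right ?_
        exact hsub.trans sdiff_subset)
      have h2 := card_le_card hsub
      have h3 : s.map (Function.Embedding.subtype _) ⊆ auxN G I := by
        intro v hv
        rw [mem_map] at hv
        obtain ⟨u, hu, rfl⟩ := hv
        exact u.2
      have h4 := card_sdiff_add_card_eq_card h3
      have h5 := card_sdiff_add_card_eq_card hPI
      rw [card_map] at h4
      omega
  · have hall := (Finset.all_card_le_biUnion_card_iff_exists_injective
      (fun u : {w // w ∉ I ∧ w ∉ auxN G I} => univ.filter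
        (fun v : {w // w ∉ I ∧ w ∉ auxN G I} => G.Adj u.1 v.1))).1 ?_
    · obtain ⟨f, hf, hf'⟩ := hall
      exact ⟨f, hf, fun w => by simpa using hf' w⟩
    · intro s
      set P := s.biUnion (fun u : {w // w ∉ I ∧ w ∉ auxN G I} => univ.filter
        (fun v : {w // w ∉ I ∧ w ∉ auxN G I} => G.Adj u.1 v.1)) with hP
      have hPm : ∀ v, v ∈ P ↔ ∃ u ∈ s, G.Adj u.1 v.1 := by
        intro v; simp only [hP, mem_biUnion, mem_filter, mem_univ, true_and]
      let e : {w // w ∉ I ∧ w ∉ auxN G I} ↪ V := Function.Embedding.subtype _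
      set J := I ∪ (s \ P).map e with hJ
      have hsub : auxN G J ⊆ auxN G I ∪ (P \ s).map e := by
        intro v hv
        rw [mem_auxN] at hv
        obtain ⟨x, hx, hxv⟩ := hv
        rw [mem_union]
        rw [hJ, mem_union] at hx
        rcases hx with hx | hx
        · exact Or.inl ((mem_auxN _ _ _).2 ⟨x, hx, hxv⟩)
        · by_cases hvU : v ∈ auxN G I
          · exact Or.inl hvU
          · right
            rw [mem_map] at hx
            obtain ⟨u, hu, rfl⟩ := hx
            rw [mem_sdiff] at hu
            have hvI : v ∉ I := fun hvI => u.2.2 ((mem_auxN _ _ _).2 ⟨v, hvI, hxv.symm⟩)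
            rw [mem_map]
            refine ⟨⟨v, hvI, hvU⟩, ?_, rfl⟩
            rw [mem_sdiff]
            refine ⟨(hPm _).2 ⟨u, hu.1, hxv⟩, fun hvs => hu.2 ?_⟩
            exact (hPm _).2 ⟨_, hvs, hxv.symm⟩
      have h1 := hmax J (by
        rw [disjoint_left]
        intro v hv hv'
        have hv' := hsub hv'
        rw [mem_union] at hv'
        rw [hJ, mem_union] at hv
        rcases hv with hv | hv <;> rcases hv' with hv' | hv'
        · exact disjoint_left.1 hI hv hv'
        · rw [mem_map] at hv'
          obtain ⟨u, hu, rfl⟩ := hv'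
          exact u.2.1 hv
        · rw [mem_map] at hv
          obtain ⟨u, hu, rfl⟩ := hv
          exact u.2.2 hv'
        · rw [mem_map] at hv hv'
          obtain ⟨u, hu, rfl⟩ := hv
          obtain ⟨u', hu', hh⟩ := hv'
          have := e.injective hh
          subst this
          rw [mem_sdiff] at hu hu'
          exact hu'.2 hu.1)
      have h2 := (card_le_card hsub).trans (card_union_le _ _)
      have h3 : J.card = I.card + (s \ P).card := by
        rw [hJ, card_union_of_disjoint, card_map]
        rw [disjoint_left]
        intro v hv hv'
        rw [mem_map] at hv'
        obtain ⟨u, hu, rfl⟩ := hv'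
        exact u.2.1 hv
      rw [card_map] at h2
      have h4 := card_sdiff_add_card_inter s P
      have h5 := card_sdiff_add_card_inter P s
      rw [inter_comm] at h5
      omega

open Finset Classical in
theorem aux_indep {V : Type*} [Fintype V] (G : SimpleGraph V) [DecidableRel G.Adj]
    (t : ℕ) (harb : G.ArboricityLE t) (I : Finset V) (hI : Disjoint I (auxN G I)) :
    (I.filter (fun v => (G.degree v ≤ t ∧ ∃ w, G.Adj v w ∧ G.degree w ≤ G.degree v) ∨
          t < G.degree v)).card ≤ t * (auxN G I).card := by
  set U := auxN G I with hU
  set UL := U.filter (fun u => G.degree u ≤ t) with hUL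
  set UH := U.filter (fun u => ¬ G.degree u ≤ t) with hUH
  have hUc : UL.card + UH.card = U.card := card_filter_add_card_filter_not _
  set A := UL.biUnion (fun u => G.neighborFinset u) with hA
  have hAc : A.card ≤ UL.card * t := by
    apply card_biUnion_le_card_mul
    intro u hu
    rw [G.card_neighborFinset_eq_degree]
    exact (mem_filter.1 hu).2
  set K := I.filter (fun v => (G.degree v ≤ t ∧ ∃ w, G.Adj v w ∧ G.degree w ≤ G.degree v) ∨
          t < G.degree v) with hK
  set B := K \ A with hB
  have hBK : ∀ b ∈ B, b ∈ I ∧ t < G.degree b ∧ ∀ w, G.Adj b w → w ∈ UH := by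
    intro b hb
    rw [hB, mem_sdiff, hK, mem_filter] at hb
    obtain ⟨⟨hbI, hbK⟩, hbA⟩ := hb
    have key : ∀ w, G.Adj b w → w ∈ UH := by
      intro w hw
      rw [hUH, mem_filter]
      refine ⟨(mem_auxN _ _ _).2 ⟨b, hbI, hw⟩, fun hd => hbA ?_⟩
      rw [hA, mem_biUnion]
      refine ⟨w, mem_filter.2 ⟨(mem_auxN _ _ _).2 ⟨b, hbI, hw⟩, hd⟩, ?_⟩
      rw [SimpleGraph.mem_neighborFinset]
      exact hw.symm
    refine ⟨hbI, ?_, key⟩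
    rcases hbK with ⟨hd, w, hw, hdw⟩ | h
    · exact ((mem_filter.1 (key w hw)).2 (hdw.trans hd)).elim
    · exact h
  have hdisj : Disjoint B UH := by
    rw [disjoint_left]
    intro v hv hv'
    exact disjoint_left.1 hI (hBK v hv).1 (mem_filter.1 hv').1
  have h1 := aux_arb_between G t harb B UH hdisj
  have h2 : B.card * (t + 1) ≤ ((B ×ˢ UH).filter (fun p => G.Adj p.1 p.2)).card := by
    have : ((B ×ˢ UH).filter (fun p => G.Adj p.1 p.2)) =
        (B.sigma (fun b => G.neighborFinset b)).map (Equiv.sigmaEquivProd V V).toEmbedding := by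
      ext ⟨b, c⟩
      simp only [mem_filter, mem_product, mem_map_equiv, mem_sigma, Equiv.sigmaEquivProd_symm_apply,
        SimpleGraph.mem_neighborFinset]
      constructor
      · rintro ⟨⟨h, _⟩, h'⟩; exact ⟨h, h'⟩
      · rintro ⟨h, h'⟩; exact ⟨⟨h, (hBK b h).2.2 c h'⟩, h'⟩
    rw [this, card_map, card_sigma, ← smul_eq_mul]
    apply card_nsmul_le_sum
    intro b hb
    rw [G.card_neighborFinset_eq_degree]
    exact (hBK b hb).2.1
  have h3 : K.card ≤ B.card + A.card := by
    have := card_le_card (show K ⊆ B ∪ A by intro x hx; by_cases h : x ∈ A <;> simp [hB, hx, h])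
    exact this.trans (card_union_le _ _)
  have h4 : B.card * (t + 1) ≤ t * (B.card + UH.card) := by
    refine h2.trans (le_of_eq_of_le ?_ h1)
    congr
  rw [← hUc]
  nlinarith

/-- For `t ≥ 2` and a graph `G` of arboricity at most `t`, the set
`K_t(G) = L_t(G) ∪ H_t(G)` — locally superior vertices of degree at most `t`
together with vertices of degree greater than `t` — has size at most
`(t+1)ν(G)`. -/
theorem Kt_le_matching_of_arboricity {V : Type*} [Fintype V] (G : SimpleGraph V)
    [DecidableRel G.Adj] (t : ℕ) (ht : 2 ≤ t) (harb : G.ArboricityLE t) :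
    ∃ M : G.Subgraph, M.IsMatching ∧
      ({v : V | (G.degree v ≤ t ∧ ∃ w, G.Adj v w ∧ G.degree w ≤ G.degree v) ∨
          t < G.degree v} : Set V).ncard ≤ (t + 1) * M.edgeSet.ncard := by
  classical
  obtain ⟨I, hI, ⟨g, hg, hg'⟩, f, hf, hf'⟩ := aux_decomp G
  have hK := aux_indep G t harb I hI
  generalize auxN G I = U at *
  obtain ⟨S, hS, hcard⟩ := aux_third f hf (fun w h => (hf' w).ne (by rw [h]))
  let e : {w // w ∉ I ∧ w ∉ U} ↪ V := Function.Embedding.subtype _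
  let h : V → V := fun v => if hv : v ∉ I ∧ v ∉ U then (f ⟨v, hv⟩).1 else g v
  have hhU : ∀ u ∈ U, h u = g u := fun u hu => dif_neg (fun hv => hv.2 hu)
  have hhW : ∀ w : {w // w ∉ I ∧ w ∉ U}, h w.1 = (f w).1 := fun w => dif_pos w.2
  have hmem : ∀ v ∈ U ∪ S.map e, v ∈ U ∨ ∃ w ∈ S, w.1 = v := by
    intro v hv
    rw [Finset.mem_union, Finset.mem_map] at hv
    exact hv
  obtain ⟨M, hM, hMc⟩ := aux_matching G (U ∪ S.map e) h (by
      intro a ha b hb hab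
      rcases hmem a ha with ha | ⟨a, ha, rfl⟩ <;> rcases hmem b hb with hb | ⟨b, hb, rfl⟩
      · rw [hhU a ha, hhU b hb] at hab
        exact hg ha hb hab
      · rw [hhU a ha, hhW] at hab
        exact ((f b).2.1 (hab ▸ (hg' a ha).1)).elim
      · rw [hhU b hb, hhW] at hab
        exact ((f a).2.1 (hab ▸ (hg' b hb).1)).elim
      · rw [hhW, hhW] at hab
        rw [hf (Subtype.ext hab)]) (by
      intro a ha0 hha
      rcases hmem a ha0 with ha | ⟨a, ha, rfl⟩
      · rw [hhU a ha] at hha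
        have h1 := (hg' a ha).1
        rcases hmem _ hha with h2 | ⟨b, hb, h2⟩
        · exact Finset.disjoint_left.1 hI h1 h2
        · exact b.2.1 (h2 ▸ h1)
      · rw [hhW] at hha
        rcases hmem _ hha with h2 | ⟨b, hb, h2⟩
        · exact (f a).2.2 h2
        · exact hS a ha (Subtype.ext h2 ▸ hb)) (by
      intro a ha
      rcases hmem a ha with ha | ⟨a, ha, rfl⟩
      · rw [hhU a ha]; exact (hg' a ha).2
      · rw [hhW]; exact hf' a)
  refine ⟨M, hM, ?_⟩
  have hc : (U ∪ S.map e).card = U.card + S.card := by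
    rw [Finset.card_union_of_disjoint, Finset.card_map]
    rw [Finset.disjoint_left]
    intro v hv hv'
    rw [Finset.mem_map] at hv'
    obtain ⟨w, _, rfl⟩ := hv'
    exact w.2.2 hv
  set p : V → Prop := fun v => (G.degree v ≤ t ∧ ∃ w, G.Adj v w ∧ G.degree w ≤ G.degree v) ∨
          t < G.degree v with hp
  have hsub : ({v : V | p v} : Set V) ⊆
      ↑((I.filter p ∪ U) ∪ (Finset.univ : Finset {w // w ∉ I ∧ w ∉ U}).map e) := by
    intro v hv
    have hv : p v := hv
    by_cases h1 : v ∈ I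
    · simp [h1, hv]
    · by_cases h2 : v ∈ U
      · simp [h2]
      · have : v ∈ (Finset.univ : Finset {w // w ∉ I ∧ w ∉ U}).map e :=
          Finset.mem_map.2 ⟨⟨v, h1, h2⟩, Finset.mem_univ _, rfl⟩
        exact Finset.mem_coe.2 (Finset.mem_union_right _ this)
  have h1 := Set.ncard_le_ncard hsub (Set.toFinite _)
  rw [Set.ncard_coe_finset] at h1
  have h2 := Finset.card_union_le (I.filter p ∪ U)
    ((Finset.univ : Finset {w // w ∉ I ∧ w ∉ U}).map e)
  have h3 := Finset.card_union_le (I.filter p) U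
  rw [Finset.card_map, Finset.card_univ] at h2
  have hK' : (I.filter p).card ≤ t * U.card := by convert hK
  rw [hc] at hMc
  refine h1.trans ?_
  calc _ ≤ t * U.card + U.card + 3 * S.card := by omega
    _ ≤ (t + 1) * (U.card + S.card) := by nlinarith
    _ ≤ _ := Nat.mul_le_mul_left _ hMc
end

section
/- If G is a planar graph, then the number of locally superior vertices satisfies |L(G)| ≤ 3ν(G). -/
open Complex in
theorem LSM.log_lift (F : unitInterval × unitInterval → ℂ) (hF : Continuous F) (h0 : ∀ x, F x ≠ 0) :
    ∃ L : unitInterval × unitInterval → ℂ, Continuous L ∧ ∀ x, exp (L x) = F x := by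
  obtain ⟨L, ⟨-, hL⟩, -⟩ := isCoveringMapOn_exp.existsUnique_continuousMap_lifts
    (A := ℝ × ℝ)
    ⟨fun x => F (Set.projIcc 0 1 zero_le_one x.1, Set.projIcc 0 1 zero_le_one x.2), by
      exact hF.comp ((continuous_projIcc.comp continuous_fst).prodMk
        (continuous_projIcc.comp continuous_snd))⟩
    (a₀ := (0, 0))
    (e₀ := log (F (Set.projIcc 0 1 zero_le_one 0, Set.projIcc 0 1 zero_le_one 0)))
    (exp_log (h0 _)) (fun x => h0 _)
  refine ⟨fun x => L (x.1, x.2), L.continuous.comp (by fun_prop), fun x => ?_⟩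
  have := congrFun hL (x.1, x.2)
  simpa using this

def LSM.Var (f : unitInterval → ℂ) (θ : ℂ) : Prop :=
  ∃ L : unitInterval → ℂ, Continuous L ∧ (∀ s, Complex.exp (L s) = f s) ∧ θ = L 1 - L 0

open Complex in
theorem LSM.Var.unique {f : unitInterval → ℂ} {θ θ' : ℂ} (h : LSM.Var f θ) (h' : LSM.Var f θ') :
    θ = θ' := by
  obtain ⟨L, hL, hL1, rfl⟩ := h
  obtain ⟨L', hL', hL1', rfl⟩ := h'
  have key : ∀ s, ∃ n : ℤ, L s = L' s + n * (2 * Real.pi * I) := fun s =>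
    exp_eq_exp_iff_exists_int.mp ((hL1 s).trans (hL1' s).symm)
  choose n hn using key
  have hpi : (2 * Real.pi * I : ℂ) ≠ 0 := Complex.two_pi_I_ne_zero
  have hnc : Continuous (fun s => ((n s : ℤ) : ℝ)) := by
    have : (fun s => ((n s : ℤ) : ℝ)) = fun s => ((L s - L' s) / (2 * Real.pi * I)).re := by
      funext s
      rw [hn s]
      rw [add_sub_cancel_left, mul_div_cancel_right₀ _ hpi]
      simp
    rw [this]
    exact Complex.continuous_re.comp ((hL.sub hL').div_const _)
  have hnc' : Continuous n := Int.isClosedEmbedding_coe_real.isEmbedding.continuous_iff.mpr hnc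
  have := PreconnectedSpace.constant inferInstance hnc' (x := 0) (y := 1)
  rw [hn 0, hn 1, this]; ring

open Complex in
theorem LSM.Var.int {f : unitInterval → ℂ} {θ : ℂ} (h : LSM.Var f θ) :
    ∃ n : ℤ, θ = log (f 1) - log (f 0) + n * (2 * Real.pi * I) := by
  obtain ⟨L, hL, hL1, rfl⟩ := h
  have : exp (L 1 - L 0) = exp (log (f 1) - log (f 0)) := by
    rw [exp_sub, exp_sub, exp_log, exp_log, hL1, hL1]
    · rw [← hL1]; exact exp_ne_zero _
    · rw [← hL1]; exact exp_ne_zero _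
  exact exp_eq_exp_iff_exists_int.mp this

open Complex in
theorem LSM.Var.neg {f : unitInterval → ℂ} {θ : ℂ} (h : LSM.Var f θ) :
    LSM.Var (fun s => - f s) θ := by
  obtain ⟨L, hL, hL1, rfl⟩ := h
  refine ⟨fun s => L s + Real.pi * I, by fun_prop, fun s => ?_, by ring⟩
  rw [exp_add, exp_pi_mul_I, hL1]; ring

open Complex in
theorem LSM.log_neg_odd (z : ℂ) (hz : z ≠ 0) :
    ∃ m : ℤ, Odd m ∧ log z - log (-z) = m * (Real.pi * I) := by
  have : exp (log z) = exp (log (-z) + Real.pi * I) := by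
    rw [exp_add, exp_pi_mul_I, exp_log hz, exp_log (neg_ne_zero.mpr hz)]; ring
  obtain ⟨n, hn⟩ := exp_eq_exp_iff_exists_int.mp this
  exact ⟨2 * n + 1, ⟨n, rfl⟩, by rw [hn]; push_cast; ring⟩

open Complex in
theorem LSM.k33_top (p q : Fin 3 → ℂ) (g : Fin 3 → Fin 3 → unitInterval → ℂ)
    (hc : ∀ i j, Continuous (g i j)) (h0 : ∀ i j, g i j 0 = p i) (h1 : ∀ i j, g i j 1 = q j)
    (hd : ∀ i k j l, i ≠ k → j ≠ l → ∀ s t, g i j s ≠ g k l t) : False := by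
  have hN : ∀ i j v, ∃ n : ℤ, ∀ θ, LSM.Var (fun s => g i j s - v) θ →
      θ = log (q j - v) - log (p i - v) + n * (2 * Real.pi * I) := by
    intro i j v
    by_cases h : ∃ θ, LSM.Var (fun s => g i j s - v) θ
    · obtain ⟨θ, hθ⟩ := h
      obtain ⟨n, hn⟩ := hθ.int
      refine ⟨n, fun θ' hθ' => ?_⟩
      rw [hθ'.unique hθ, hn]
      simp only [h0, h1]
    · exact ⟨0, fun θ hθ => (h ⟨θ, hθ⟩).elim⟩
  choose n hn using hN
  have hD : ∀ u v : ℂ, ∃ m : ℤ, u ≠ v → Odd m ∧ log (u - v) - log (v - u) = m * (Real.pi * I) := by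
    intro u v
    by_cases h : u = v
    · exact ⟨0, fun h' => (h' h).elim⟩
    · obtain ⟨m, hm, hm'⟩ := LSM.log_neg_odd (u - v) (sub_ne_zero.mpr h)
      exact ⟨m, fun _ => ⟨hm, by rw [← hm']; congr 2; ring⟩⟩
  choose D hDD using hD
  have hpi : (Real.pi * I : ℂ) ≠ 0 := by simp [Real.pi_ne_zero]
  have hanti : ∀ u v, u ≠ v → D u v = - D v u := by
    intro u v h
    have a := (hDD u v h).2
    have b := (hDD v u h.symm).2
    have : ((D u v : ℂ)) * (Real.pi * I) = (-(D v u) : ℂ) * (Real.pi * I) := by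
      rw [← a, neg_mul, ← b]; ring
    have := mul_right_cancel₀ hpi this
    exact_mod_cast this
  have hpp : ∀ i k, i ≠ k → p i ≠ p k := fun i k h => by
    have := hd i k 0 1 h (by decide) 0 0
    rwa [h0, h0] at this
  have hqq : ∀ i k, i ≠ k → q i ≠ q k := fun i k h => by
    have := hd 0 1 i k (by decide) h 1 1
    rwa [h1, h1] at this
  have hpq : ∀ i j, p i ≠ q j := fun i j => by
    obtain ⟨k, hk⟩ : ∃ k, i ≠ k := by revert i; decide
    obtain ⟨l, hl⟩ : ∃ l, l ≠ j := by revert j; decide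
    have := hd i k l j hk hl 0 1
    rwa [h0, h1] at this
  have main : ∀ i k j l, i ≠ k → j ≠ l →
      D (q j) (p k) + D (p k) (p i) + D (q l) (q j) + D (p i) (q l)
      + 2 * (n i j (p k) + n k l (q j) - n i j (q l) - n k l (p i)) = 0 := by
    intro i k j l hik hjl
    obtain ⟨L, hL, hL1⟩ := LSM.log_lift (fun x => g i j x.1 - g k l x.2)
      (((hc i j).comp continuous_fst).sub ((hc k l).comp continuous_snd))
      (fun x => sub_ne_zero.mpr (hd i k j l hik hjl x.1 x.2))
    have e1 := hn i j (p k) _ ⟨fun s => L (s, 0), by fun_prop, fun s => by rw [hL1, h0], rfl⟩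
    have e2 := hn i j (q l) _ ⟨fun s => L (s, 1), by fun_prop, fun s => by rw [hL1, h1], rfl⟩
    have v3 : LSM.Var (fun t => q j - g k l t) (L (1, 1) - L (1, 0)) :=
      ⟨fun s => L (1, s), by fun_prop, fun s => by rw [hL1, h1], rfl⟩
    have v4 : LSM.Var (fun t => p i - g k l t) (L (0, 1) - L (0, 0)) :=
      ⟨fun s => L (0, s), by fun_prop, fun s => by rw [hL1, h0], rfl⟩
    have e3 := hn k l (q j) _ (by simpa using v3.neg)
    have e4 := hn k l (p i) _ (by simpa using v4.neg)
    have d1 := (hDD (q j) (p k) (hpq k j).symm).2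
    have d2 := (hDD (p k) (p i) (hpp _ _ hik.symm)).2
    have d3 := (hDD (q l) (q j) (hqq _ _ hjl.symm)).2
    have d4 := (hDD (p i) (q l) (hpq _ _)).2
    have : ((D (q j) (p k) + D (p k) (p i) + D (q l) (q j) + D (p i) (q l)
      + 2 * (n i j (p k) + n k l (q j) - n i j (q l) - n k l (p i)) : ℤ) : ℂ) * (Real.pi * I)
      = 0 * (Real.pi * I) := by
      push_cast
      linear_combination -d1 - d2 - d3 - d4 - e1 + e2 - e3 + e4
    have := mul_right_cancel₀ hpi this
    exact_mod_cast this
  have a01 := main 0 1 0 1 (by decide) (by decide)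
  have a02 := main 0 1 0 2 (by decide) (by decide)
  have a12 := main 0 1 1 2 (by decide) (by decide)
  have a10 := main 0 1 1 0 (by decide) (by decide)
  have a20 := main 0 1 2 0 (by decide) (by decide)
  have a21 := main 0 1 2 1 (by decide) (by decide)
  have b01 := main 0 2 0 1 (by decide) (by decide)
  have b02 := main 0 2 0 2 (by decide) (by decide)
  have b12 := main 0 2 1 2 (by decide) (by decide)
  have b10 := main 0 2 1 0 (by decide) (by decide)
  have b20 := main 0 2 2 0 (by decide) (by decide)
  have b21 := main 0 2 2 1 (by decide) (by decide)
  have c01 := main 1 2 0 1 (by decide) (by decide)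
  have c02 := main 1 2 0 2 (by decide) (by decide)
  have c12 := main 1 2 1 2 (by decide) (by decide)
  have c10 := main 1 2 1 0 (by decide) (by decide)
  have c20 := main 1 2 2 0 (by decide) (by decide)
  have c21 := main 1 2 2 1 (by decide) (by decide)
  have q01 := hanti (q 0) (q 1) (hqq _ _ (by decide))
  have q02 := hanti (q 0) (q 2) (hqq _ _ (by decide))
  have q12 := hanti (q 1) (q 2) (hqq _ _ (by decide))
  have r : ∀ i j, D (q j) (p i) = - D (p i) (q j) := fun i j => hanti _ _ (hpq i j).symm
  obtain ⟨x1, hx1⟩ := (hDD (p 1) (p 0) (hpp _ _ (by decide))).1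
  obtain ⟨x2, hx2⟩ := (hDD (p 2) (p 0) (hpp _ _ (by decide))).1
  obtain ⟨x3, hx3⟩ := (hDD (p 2) (p 1) (hpp _ _ (by decide))).1
  have o : ∀ i j, ∃ y, D (p i) (q j) = 2 * y + 1 := fun i j => (hDD _ _ (hpq i j)).1
  choose y hy using o
  clear hDD hanti main hn
  simp only [r, hy] at a01 a02 a12 a10 a20 a21 b01 b02 b12 b10 b20 b21 c01 c02 c12 c10 c20 c21
  simp only [q01, q02, q12, hx1, hx2, hx3] at a01 a02 a12 a10 a20 a21 b01 b02 b12 b10 b20 b21 c01 c02 c12 c10 c20 c21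
  clear q01 q02 q12 hx1 hx2 hx3 r hy
  have S0 := congrArg₂ (fun x y : ℤ => x + y) a01 a02
  beta_reduce at S0
  have S1 := congrArg₂ (fun x y : ℤ => x + y) S0 a12
  beta_reduce at S1
  have S2 := congrArg₂ (fun x y : ℤ => x + y) S1 a10
  beta_reduce at S2
  have S3 := congrArg₂ (fun x y : ℤ => x + y) S2 a20
  beta_reduce at S3
  have S4 := congrArg₂ (fun x y : ℤ => x + y) S3 a21
  beta_reduce at S4
  have S5 := congrArg₂ (fun x y : ℤ => x + y) S4 b01
  beta_reduce at S5
  have S6 := congrArg₂ (fun x y : ℤ => x + y) S5 b02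
  beta_reduce at S6
  have S7 := congrArg₂ (fun x y : ℤ => x + y) S6 b12
  beta_reduce at S7
  have S8 := congrArg₂ (fun x y : ℤ => x + y) S7 b10
  beta_reduce at S8
  have S9 := congrArg₂ (fun x y : ℤ => x + y) S8 b20
  beta_reduce at S9
  have S10 := congrArg₂ (fun x y : ℤ => x + y) S9 b21
  beta_reduce at S10
  have S11 := congrArg₂ (fun x y : ℤ => x + y) S10 c01
  beta_reduce at S11
  have S12 := congrArg₂ (fun x y : ℤ => x + y) S11 c02
  beta_reduce at S12
  have S13 := congrArg₂ (fun x y : ℤ => x + y) S12 c12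
  beta_reduce at S13
  have S14 := congrArg₂ (fun x y : ℤ => x + y) S13 c10
  beta_reduce at S14
  have S15 := congrArg₂ (fun x y : ℤ => x + y) S14 c20
  beta_reduce at S15
  have S16 := congrArg₂ (fun x y : ℤ => x + y) S15 c21
  beta_reduce at S16
  clear a01 a02 a12 a10 a20 a21 b01 b02 b12 b10 b20 b21 c01 c02 c12 c10 c20 c21 S0 S1 S2 S3 S4 S5 S6 S7 S8 S9 S10 S11 S12 S13 S14 S15
  ring_nf at S16
  omega
def LSM.R {V : Type*} (G : SimpleGraph V) (W : Set V) (u v : V) : Prop :=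
  G.Adj u v ∧ u ∈ W ∧ v ∈ W

def LSM.Conn {V : Type*} (G : SimpleGraph V) (W : Set V) : Prop :=
  ∀ x ∈ W, ∀ y ∈ W, Relation.ReflTransGen (LSM.R G W) x y

theorem LSM.R.mono {V : Type*} {G : SimpleGraph V} {W W' : Set V} (h : W ⊆ W') {x y : V}
    (hxy : Relation.ReflTransGen (LSM.R G W) x y) : Relation.ReflTransGen (LSM.R G W') x y :=
  by
  induction hxy with
  | refl => exact .refl
  | tail _ h' ih => exact ih.tail ⟨h'.1, h h'.2.1, h h'.2.2⟩

theorem LSM.R.symm {V : Type*} {G : SimpleGraph V} {W : Set V} {x y : V}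
    (hxy : Relation.ReflTransGen (LSM.R G W) x y) : Relation.ReflTransGen (LSM.R G W) y x :=
  by
  induction hxy with
  | refl => exact .refl
  | tail _ h' ih => exact ih.head ⟨h'.1.symm, h'.2.2, h'.2.1⟩

def LSM.HasK33 {V : Type*} (G : SimpleGraph V) : Prop :=
  ∃ (s : Fin 3 → V) (B : Fin 3 → Set V), Function.Injective s ∧
    (∀ i k, i ≠ k → Disjoint (B i) (B k)) ∧ (∀ i j, s j ∉ B i) ∧ (∀ i, LSM.Conn G (B i)) ∧
    ∀ i j, ∃ x ∈ B i, G.Adj (s j) x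

theorem LSM.not_hasK33 {V : Type*} (G : SimpleGraph V) (hG : G.IsPlanar) : ¬ LSM.HasK33 G := by
  rintro ⟨s, B, hs, hB, hsB, hconn, hadj⟩
  obtain ⟨pos, γ, hinj, hγ, -, hint, hdis⟩ := hG
  let Tr : Set V → Set (ℝ × ℝ) := fun W =>
    pos '' W ∪ {z | ∃ (u v : V) (h : G.Adj u v) (t : unitInterval), u ∈ W ∧ v ∈ W ∧ γ h t = z}
  have hTr : ∀ W W', Disjoint W W' → ∀ z ∈ Tr W, z ∉ Tr W' := by
    intro W W' hW z hz hz'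
    have hne := Set.disjoint_left.mp hW
    have aux : ∀ (W W' : Set V), (∀ a ∈ W, a ∉ W') → ∀ u v (h : G.Adj u v) (t : unitInterval),
        u ∈ W → v ∈ W → ∀ w ∈ W', γ h t ≠ pos w := by
      intro W W' hne u v h t hu hv w hw
      by_cases h0 : t = 0
      · rw [h0, (hγ h).2.2.1]
        exact fun h' => hne _ hu (hinj h' ▸ hw)
      by_cases h1 : t = 1
      · rw [h1, (hγ h).2.2.2]
        exact fun h' => hne _ hv (hinj h' ▸ hw)
      exact hint h t h0 h1 w
    have hne' : ∀ a ∈ W', a ∉ W := fun a h h' => hne h' h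
    rcases hz with ⟨a, ha, rfl⟩ | ⟨u, v, h, t, hu, hv, rfl⟩
    · rcases hz' with ⟨b, hb, hab⟩ | ⟨u', v', h', t', hu', hv', e⟩
      · exact hne ha (hinj hab ▸ hb)
      · exact aux W' W hne' _ _ h' t' hu' hv' _ ha e
    · rcases hz' with ⟨b, hb, hab⟩ | ⟨u', v', h', t', hu', hv', e⟩
      · exact aux W W' (fun a h => hne h) _ _ h t hu hv _ hb hab.symm
      · have hss : s(u, v) ≠ s(u', v') := by
          intro he
          have : u ∈ s(u', v') := he ▸ Sym2.mem_mk_left u v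
          rcases Sym2.mem_iff.mp this with rfl | rfl
          · exact hne hu hu'
          · exact hne hu hv'
        rcases hdis h h' t t' hss e.symm with h0 | h0
        · apply aux W' W hne' _ _ h' t' hu' hv' u hu
          rw [e, h0, (hγ h).2.2.1]
        · apply aux W' W hne' _ _ h' t' hu' hv' v hv
          rw [e, h0, (hγ h).2.2.2]
  have hJ : ∀ W x y, x ∈ W → Relation.ReflTransGen (LSM.R G W) x y →
      JoinedIn (Tr W) (pos x) (pos y) := by
    intro W x y hx h
    induction h with
    | refl => exact JoinedIn.refl (Or.inl ⟨x, hx, rfl⟩)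
    | @tail b c _ hbc ih =>
      refine ih.trans ⟨⟨⟨γ hbc.1, (hγ hbc.1).1⟩, (hγ hbc.1).2.2.1, (hγ hbc.1).2.2.2⟩, ?_⟩
      intro t
      exact Or.inr ⟨b, c, hbc.1, t, hbc.2.1, hbc.2.2, rfl⟩
  choose a ha hsa using hadj
  have key : ∀ i j, JoinedIn (Tr (B i ∪ {s j})) (pos (a i 0)) (pos (s j)) := by
    intro i j
    apply hJ _ _ _ (Or.inl (ha i 0))
    exact (LSM.R.mono Set.subset_union_left (hconn i _ (ha i 0) _ (ha i j))).tail
      ⟨(hsa i j).symm, Or.inl (ha i j), Or.inr rfl⟩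
  refine LSM.k33_top (fun i => Complex.equivRealProdCLM.symm (pos (a i 0)))
    (fun j => Complex.equivRealProdCLM.symm (pos (s j)))
    (fun i j t => Complex.equivRealProdCLM.symm ((key i j).somePath t)) ?_ ?_ ?_ ?_
  · intro i j
    exact Complex.equivRealProdCLM.symm.continuous.comp (key i j).somePath.continuous
  · intro i j; simp
  · intro i j; simp
  · intro i k j l hik hjl t t' e
    have e' := Complex.equivRealProdCLM.symm.injective e
    have h1 := (key i j).somePath_mem t
    have h2 := (key k l).somePath_mem t'
    rw [← e'] at h2
    refine hTr _ _ ?_ _ h1 h2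
    rw [Set.disjoint_left]
    rintro x (hx | hx) (hx' | hx')
    · exact Set.disjoint_left.mp (hB i k hik) hx hx'
    · rw [Set.mem_singleton_iff] at hx'; subst hx'; exact hsB _ _ hx
    · rw [Set.mem_singleton_iff] at hx; subst hx; exact hsB _ _ hx'
    · rw [Set.mem_singleton_iff] at hx hx'; exact hjl (hs (hx.symm.trans hx'))

structure LSM.Model {V ι : Type*} (G : SimpleGraph V) (S : Finset V) (P : Finset ι)
    (τ : V → Finset ι) (B : ι → Set V) : Prop where
  sub : ∀ s ∈ S, τ s ⊆ P
  card : ∀ s ∈ S, (τ s).card = 3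
  adj : ∀ s ∈ S, ∀ k ∈ τ s, ∃ x ∈ B k, G.Adj s x
  conn : ∀ k ∈ P, LSM.Conn G (B k)
  disj : ∀ k ∈ P, ∀ l ∈ P, k ≠ l → Disjoint (B k) (B l)
  notin : ∀ s ∈ S, ∀ k ∈ P, s ∉ B k

def LSM.Q {V ι : Type*} (S : Finset V) (τ : V → Finset ι) (a b k l : ι) : Prop :=
  k ≠ a ∧ k ≠ b ∧ l ≠ a ∧ l ≠ b ∧ ∃ s ∈ S, k ∈ τ s ∧ l ∈ τ s

open Relation in
theorem LSM.k33_of_reach {V ι : Type*} {G : SimpleGraph V} {S : Finset V} {P : Finset ι}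
    {τ : V → Finset ι} {B : ι → Set V} (M : LSM.Model G S P τ B) {a b c : ι}
    (ha : a ∈ P) (hb : b ∈ P) (hc : c ∈ P)
    (hac : a ≠ c) (hba : b ≠ a) (hbc : b ≠ c) {x0 : V} (hx0 : x0 ∈ B b)
    (s : Fin 3 → V) (hs : Function.Injective s) (hsS : ∀ i, s i ∈ S)
    (hsa : ∀ i, a ∈ τ (s i)) (hsc : ∀ i, c ∈ τ (s i)) (d : Fin 3 → ι) (hd : ∀ i, d i ∈ τ (s i))
    (hr : ∀ i, ReflTransGen (LSM.Q S τ a c) b (d i)) : LSM.HasK33 G := by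
  classical
  let Z : Set V := {x | ∃ k, ReflTransGen (LSM.Q S τ a c) b k ∧ x ∈ B k} ∪
    {v | v ∈ S ∧ ¬ (a ∈ τ v ∧ c ∈ τ v) ∧ ∃ k ∈ τ v, ReflTransGen (LSM.Q S τ a c) b k}
  have hk : ∀ k, ReflTransGen (LSM.Q S τ a c) b k → k ∈ P ∧ k ≠ a ∧ k ≠ c := by
    intro k h
    rcases h.cases_tail with rfl | ⟨l, -, -, -, h1, h2, v, hv, -, hkv⟩
    · exact ⟨hb, hba, hbc⟩
    · exact ⟨M.sub v hv hkv, h1, h2⟩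
  have claim : ∀ k, ReflTransGen (LSM.Q S τ a c) b k → ∀ x ∈ B k,
      ReflTransGen (LSM.R G Z) x0 x := by
    intro k h
    induction h with
    | refl =>
      intro x hx
      exact LSM.R.mono (fun y hy => Or.inl ⟨b, .refl, hy⟩) (M.conn b hb x0 hx0 x hx)
    | @tail k l hbk hkl ih =>
      intro x hx
      by_cases hkl' : k = l
      · subst hkl'; exact ih x hx
      have hbl := hbk.tail hkl
      obtain ⟨h1, h2, h3, h4, v, hv, hkv, hlv⟩ := hkl
      obtain ⟨y, hy, hvy⟩ := M.adj v hv k hkv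
      obtain ⟨z, hz, hvz⟩ := M.adj v hv l hlv
      have hyZ : y ∈ Z := Or.inl ⟨k, hbk, hy⟩
      have hzZ : z ∈ Z := Or.inl ⟨l, hbl, hz⟩
      have hvZ : v ∈ Z := by
        refine Or.inr ⟨hv, ?_, k, hkv, hbk⟩
        rintro ⟨hav, hcv⟩
        have hsub : ({a, c, k, l} : Finset ι) ⊆ τ v := by
          intro t ht
          simp only [Finset.mem_insert, Finset.mem_singleton] at ht
          rcases ht with rfl | rfl | rfl | rfl <;> assumption
        have := Finset.card_le_card hsub
        rw [M.card v hv, Finset.card_insert_of_notMem, Finset.card_insert_of_notMem,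
          Finset.card_insert_of_notMem, Finset.card_singleton] at this
        · omega
        · simpa using hkl'
        · simp [h2.symm, h4.symm]
        · simp [h1.symm, h3.symm, hac]
      refine (((ih y hy).tail ⟨hvy.symm, hyZ, hvZ⟩).tail ⟨hvz, hvZ, hzZ⟩).trans ?_
      exact LSM.R.mono (fun w hw => Or.inl ⟨l, hbl, hw⟩) (M.conn l (hk l hbl).1 z hz x hx)
  have claim2 : ∀ x ∈ Z, ReflTransGen (LSM.R G Z) x0 x := by
    intro x hx
    rcases hx with ⟨k, hbk, hx⟩ | ⟨hxS, hn, k, hkx, hbk⟩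
    · exact claim k hbk x hx
    · obtain ⟨y, hy, hxy⟩ := M.adj x hxS k hkx
      exact (claim k hbk y hy).tail ⟨hxy.symm, Or.inl ⟨k, hbk, hy⟩, Or.inr ⟨hxS, hn, k, hkx, hbk⟩⟩
  have hZd : ∀ e ∈ P, (e = a ∨ e = c) → Disjoint (B e) Z := by
    intro e he hea
    rw [Set.disjoint_left]
    rintro x hx (⟨k, hbk, hx'⟩ | ⟨hxS, -⟩)
    · refine Set.disjoint_left.mp (M.disj e he k (hk k hbk).1 ?_) hx hx'
      rcases hea with rfl | rfl
      · exact (hk k hbk).2.1.symm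
      · exact (hk k hbk).2.2.symm
    · exact M.notin x hxS e he hx
  have h01 := M.disj a ha c hc hac
  have h02 := hZd a ha (Or.inl rfl)
  have h12 := hZd c hc (Or.inr rfl)
  refine ⟨s, ![B a, B c, Z], hs, ?_, ?_, ?_, ?_⟩
  · intro i k hik
    fin_cases i <;> fin_cases k <;>
      first
        | exact absurd rfl hik
        | exact h01
        | exact h02
        | exact h12
        | exact h01.symm
        | exact h02.symm
        | exact h12.symm
  · intro i j
    fin_cases i
    · exact M.notin _ (hsS j) a ha
    · exact M.notin _ (hsS j) c hc
    · rintro (⟨k, hbk, hx⟩ | ⟨-, hn, -⟩)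
      · exact M.notin _ (hsS j) k (hk k hbk).1 hx
      · exact hn ⟨hsa j, hsc j⟩
  · intro i
    fin_cases i
    · exact M.conn a ha
    · exact M.conn c hc
    · exact fun x hx y hy => (LSM.R.symm (claim2 x hx)).trans (claim2 y hy)
  · intro i j
    fin_cases i
    · exact M.adj _ (hsS j) a (hsa j)
    · exact M.adj _ (hsS j) c (hsc j)
    · obtain ⟨x, hx, hsx⟩ := M.adj _ (hsS j) (d j) (hd j)
      exact ⟨x, Or.inl ⟨d j, hr j, hx⟩, hsx⟩

open Relation in
theorem LSM.thick {V ι : Type*} [Finite ι] [DecidableEq ι] {G : SimpleGraph V} {S : Finset V}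
    {P : Finset ι}
    {τ : V → Finset ι} {B : ι → Set V} (M : LSM.Model G S P τ B)
    (hS : S.Nonempty)
    (hthick : ∀ a b, a ≠ b → (∃ s ∈ S, a ∈ τ s ∧ b ∈ τ s) →
      3 ≤ (S.filter (fun s => a ∈ τ s ∧ b ∈ τ s)).card) : LSM.HasK33 G := by
  classical
  by_contra hno
  have main : ∀ n : ℕ, ∀ a b c s, a ≠ b → a ≠ c → b ≠ c → s ∈ S → a ∈ τ s → b ∈ τ s → c ∈ τ s →
      {k | ReflTransGen (LSM.Q S τ a b) c k}.ncard = n → False := by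
    intro n
    induction n using Nat.strong_induction_on with
    | _ n ih =>
    intro a b c s hab hac hbc hs has hbs hcs hn
    have h3 := hthick a c hac ⟨s, hs, has, hcs⟩
    obtain ⟨T, hT, hT3⟩ := Finset.exists_subset_card_eq h3
    let e := (T.equivFinOfCardEq hT3).symm
    have he : ∀ i, (e i : V) ∈ S ∧ a ∈ τ (e i) ∧ c ∈ τ (e i) := fun i => by
      have := hT (e i).2
      simpa using this
    have hthird : ∀ i, ∃ d ∈ τ (e i), d ≠ a ∧ d ≠ c := by
      intro i
      have hcard := M.card _ (he i).1
      have : 0 < ((τ (e i)).erase a |>.erase c).card := by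
        have h1 := Finset.pred_card_le_card_erase (s := τ (e i)) (a := a)
        have h2 := Finset.pred_card_le_card_erase (s := (τ (e i)).erase a) (a := c)
        omega
      obtain ⟨d, hd⟩ := Finset.card_pos.mp this
      simp only [Finset.mem_erase] at hd
      exact ⟨d, hd.2.2, hd.2.1, hd.1⟩
    choose d hd hda hdc using hthird
    by_cases hall : ∀ i, ReflTransGen (LSM.Q S τ a c) b (d i)
    · obtain ⟨x0, hx0, -⟩ := M.adj s hs b hbs
      exact hno (LSM.k33_of_reach M (M.sub s hs has) (M.sub s hs hbs) (M.sub s hs hcs) hac hab.symm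
        hbc hx0 (fun i => (e i : V)) (fun i j h => e.injective (Subtype.ext h)) (fun i => (he i).1)
        (fun i => (he i).2.1) (fun i => (he i).2.2) d hd hall)
    · push Not at hall
      obtain ⟨i, hi⟩ := hall
      have hdb : d i ≠ b := fun h => hi (h ▸ .refl)
      have hsym : ∀ x y, ReflTransGen (LSM.Q S τ a c) x y → ReflTransGen (LSM.Q S τ a c) y x := by
        intro x y h
        induction h with
        | refl => exact .refl
        | tail _ h' ih =>
          obtain ⟨h1, h2, h3, h4, v, hv, h5, h6⟩ := h'
          exact ih.head ⟨h3, h4, h1, h2, v, hv, h6, h5⟩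
      refine ih _ ?_ a c (d i) (e i) hac (hda i).symm (hdc i).symm (he i).1 (he i).2.1 (he i).2.2
        (hd i) rfl
      rw [← hn]
      apply Set.ncard_lt_ncard _ (Set.toFinite _)
      refine ⟨?_, ?_⟩
      · intro x hx
        have hx : ReflTransGen (LSM.Q S τ a c) (d i) x := hx
        show ReflTransGen (LSM.Q S τ a b) c x
        induction hx with
        | refl =>
          exact .single ⟨hac.symm, hbc.symm, hda i, hdb, e i, (he i).1, (he i).2.2, hd i⟩
        | @tail k l hk hkl ih' =>
          have hl := hk.tail hkl
          obtain ⟨h1, h2, h3, h4, v, hv, h5, h6⟩ := hkl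
          refine (ih' hk).tail ⟨h1, ?_, h3, ?_, v, hv, h5, h6⟩
          · rintro rfl; exact hi (hsym _ _ hk)
          · rintro rfl; exact hi (hsym _ _ hl)
      · intro hsub
        have : ReflTransGen (LSM.Q S τ a c) (d i) c := hsub (show _ from ReflTransGen.refl)
        rcases this.cases_tail with h | ⟨l, -, -, -, -, h2, -⟩
        · exact hdc i h.symm
        · exact h2 rfl
  obtain ⟨s, hs⟩ := hS
  obtain ⟨a, b, c, hab, hac, hbc, h⟩ := Finset.card_eq_three.mp (M.card s hs)
  exact main _ a b c s hab hac hbc hs (by simp [h]) (by simp [h]) (by simp [h]) rfl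

theorem LSM.bound {V ι : Type*} [Finite ι] {G : SimpleGraph V} (hG : ¬ LSM.HasK33 G) (n : ℕ) :
    ∀ {S : Finset V} {P : Finset ι} {τ : V → Finset ι} {B : ι → Set V},
    LSM.Model G S P τ B → P.card = n → S.card ≤ 2 * P.card := by
  classical
  induction n with
  | zero =>
    intro S P τ B M hP
    rcases S.eq_empty_or_nonempty with rfl | ⟨s, hs⟩
    · simp
    · have := Finset.card_le_card (M.sub s hs)
      rw [M.card s hs] at this
      omega
  | succ n ih =>
    intro S P τ B M hP
    rcases S.eq_empty_or_nonempty with rfl | hS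
    · simp
    by_cases hthick : ∀ a b, a ≠ b → (∃ s ∈ S, a ∈ τ s ∧ b ∈ τ s) →
      3 ≤ (S.filter (fun s => a ∈ τ s ∧ b ∈ τ s)).card
    · exact (hG (LSM.thick M hS hthick)).elim
    push Not at hthick
    obtain ⟨a, b, hab, ⟨s0, hs0, has0, hbs0⟩, hlt⟩ := hthick
    have haP := M.sub s0 hs0 has0
    have hbP := M.sub s0 hs0 hbs0
    let f : ι → ι := fun k => if k = b then a else k
    let B' := Function.update B a (B a ∪ B b ∪ {s0})
    have hB' : ∀ k, k ≠ a → B' k = B k := fun k hk => Function.update_of_ne hk _ _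
    have hB'a : B' a = B a ∪ B b ∪ {s0} := Function.update_self _ _ _
    have hsubB : ∀ k, B k ⊆ B' (f k) := by
      intro k
      by_cases hk : k = b
      · subst hk; simp only [f, if_true, hB'a]
        intro x hx; exact Or.inl (Or.inr hx)
      · simp only [f, if_neg hk]
        by_cases hk' : k = a
        · subst hk'; rw [hB'a]; intro x hx; exact Or.inl (Or.inl hx)
        · rw [hB' k hk']
    have hfin : ∀ k ∈ P, f k ∈ P.erase b := by
      intro k hk
      by_cases hkb : k = b
      · simp [f, hkb, hab, haP]
      · simp [f, hkb, hk]
    have M' : LSM.Model G (S.filter (fun s => ¬ (a ∈ τ s ∧ b ∈ τ s))) (P.erase b)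
        (fun s => (τ s).image f) B' := by
      refine ⟨?_, ?_, ?_, ?_, ?_, ?_⟩
      · intro s hs k hk
        obtain ⟨l, hl, rfl⟩ := Finset.mem_image.mp hk
        exact hfin l (M.sub s (Finset.mem_filter.mp hs).1 hl)
      · intro s hs
        obtain ⟨hs, hns⟩ := Finset.mem_filter.mp hs
        rw [Finset.card_image_of_injOn, M.card s hs]
        intro k hk l hl hkl
        simp only [f] at hkl
        have hk : k ∈ τ s := hk
        have hl : l ∈ τ s := hl
        split_ifs at hkl with h1 h2 h2
        · rw [h1, h2]
        · subst h1; subst hkl; exact (hns ⟨hl, hk⟩).elim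
        · subst h2; subst hkl; exact (hns ⟨hk, hl⟩).elim
        · exact hkl
      · intro s hs k hk
        obtain ⟨l, hl, rfl⟩ := Finset.mem_image.mp hk
        obtain ⟨x, hx, hsx⟩ := M.adj s (Finset.mem_filter.mp hs).1 l hl
        exact ⟨x, hsubB l hx, hsx⟩
      · intro k hk
        by_cases hka : k = a
        · subst hka
          rw [hB'a]
          obtain ⟨x, hx, hsx⟩ := M.adj s0 hs0 k has0
          obtain ⟨y, hy, hsy⟩ := M.adj s0 hs0 b hbs0
          have hu1 : B k ⊆ B k ∪ B b ∪ {s0} := fun z hz => Or.inl (Or.inl hz)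
          have hu2 : B b ⊆ B k ∪ B b ∪ {s0} := fun z hz => Or.inl (Or.inr hz)
          have hu3 : s0 ∈ B k ∪ B b ∪ {s0} := Or.inr rfl
          have key : ∀ z ∈ B k ∪ B b ∪ {s0},
              Relation.ReflTransGen (LSM.R G (B k ∪ B b ∪ {s0})) s0 z := by
            rintro z ((hz | hz) | hz)
            · exact (LSM.R.mono hu1 (M.conn k haP x hx z hz)).head ⟨hsx, hu3, hu1 hx⟩
            · exact (LSM.R.mono hu2 (M.conn b hbP y hy z hz)).head ⟨hsy, hu3, hu2 hy⟩
            · rw [Set.mem_singleton_iff.mp hz]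
          exact fun x hx y hy => (LSM.R.symm (key x hx)).trans (key y hy)
        · rw [hB' k hka]
          exact M.conn k (Finset.mem_erase.mp hk).2
      · have aux : ∀ l ∈ P.erase b, l ≠ a → Disjoint (B' a) (B' l) := by
          intro l hl hla
          obtain ⟨hlb, hlP⟩ := Finset.mem_erase.mp hl
          rw [hB'a, hB' l hla, Set.disjoint_left]
          rintro x ((hx | hx) | hx) hx'
          · exact Set.disjoint_left.mp (M.disj a haP l hlP hla.symm) hx hx'
          · exact Set.disjoint_left.mp (M.disj b hbP l hlP hlb.symm) hx hx'
          · rw [Set.mem_singleton_iff.mp hx] at hx'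
            exact M.notin s0 hs0 l hlP hx'
        intro k hk l hl hkl
        by_cases hka : k = a
        · subst hka; exact aux l hl hkl.symm
        by_cases hla : l = a
        · subst hla; exact (aux k hk hkl).symm
        rw [hB' k hka, hB' l hla]
        exact M.disj k (Finset.mem_erase.mp hk).2 l (Finset.mem_erase.mp hl).2 hkl
      · intro s hs k hk
        obtain ⟨hsS, hns⟩ := Finset.mem_filter.mp hs
        by_cases hka : k = a
        · subst hka
          rw [hB'a]
          rintro ((hx | hx) | hx)
          · exact M.notin s hsS k haP hx
          · exact M.notin s hsS b hbP hx
          · rw [Set.mem_singleton_iff.mp hx] at hns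
            exact hns ⟨has0, hbs0⟩
        · rw [hB' k hka]
          exact M.notin s hsS k (Finset.mem_erase.mp hk).2
    have hcardP : (P.erase b).card = n := by
      rw [Finset.card_erase_of_mem hbP, hP]; rfl
    have h1 := ih M' hcardP
    have h2 := Finset.card_filter_add_card_filter_not (s := S) (fun s => a ∈ τ s ∧ b ∈ τ s)
    omega

noncomputable def LSM.odd {V : Type*} (G : SimpleGraph V) (A : Set V) : ℕ :=
  ((⊤ : G.Subgraph).deleteVerts A).coe.oddComponents.ncard

theorem LSM.odd_parity {V : Type*} [Finite V] (G : SimpleGraph V) (A : Set V) :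
    (Odd (LSM.odd G A) ↔ Odd (Nat.card V - A.ncard)) ∧ A.ncard ≤ Nat.card V := by
  have h2 : A.ncard ≤ Nat.card V := Set.ncard_le_card A
  refine ⟨?_, h2⟩
  rw [LSM.odd, SimpleGraph.odd_ncard_oddComponents]
  have : Nat.card ((⊤ : G.Subgraph).deleteVerts A).verts = Nat.card V - A.ncard := by
    rw [Nat.card_coe_set_eq]
    simp only [SimpleGraph.Subgraph.deleteVerts_verts, SimpleGraph.Subgraph.verts_top]
    rw [Set.ncard_sdiff (Set.subset_univ _), Set.ncard_univ]
  rw [this]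

def LSM.join {V : Type*} (G : SimpleGraph V) (d : ℕ) : SimpleGraph (V ⊕ Fin d) where
  Adj x y := x ≠ y ∧ ∀ u v, x = Sum.inl u → y = Sum.inl v → G.Adj u v
  symm := ⟨fun x y h => ⟨h.1.symm, fun u v hu hv => (h.2 v u hv hu).symm⟩⟩
  loopless := ⟨fun x h => h.1 rfl⟩

theorem LSM.join_inl {V : Type*} (G : SimpleGraph V) (d : ℕ) (u v : V) :
    (LSM.join G d).Adj (Sum.inl u) (Sum.inl v) ↔ G.Adj u v := by
  constructor
  · intro h; exact h.2 u v rfl rfl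
  · intro h
    refine ⟨fun h' => h.ne (Sum.inl_injective h'), ?_⟩
    rintro u v h1 h2
    rwa [← Sum.inl_injective h1, ← Sum.inl_injective h2]

theorem LSM.odd_join_of_notMem {V : Type*} [Finite V] (G : SimpleGraph V) (d : ℕ)
    (A : Set (V ⊕ Fin d)) (j : Fin d) (hj : Sum.inr j ∉ A) : LSM.odd (LSM.join G d) A ≤ 1 := by
  rw [LSM.odd]
  have hj' : Sum.inr j ∈ ((⊤ : (LSM.join G d).Subgraph).deleteVerts A).verts := by
    simpa using hj
  have hr : ∀ x, ((⊤ : (LSM.join G d).Subgraph).deleteVerts A).coe.Reachable ⟨_, hj'⟩ x := by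
    rintro ⟨x, hx⟩
    by_cases h : Sum.inr j = x
    · subst h; exact SimpleGraph.Reachable.refl _
    · apply SimpleGraph.Adj.reachable
      have hxA : x ∉ A := by simpa using hx
      simp only [SimpleGraph.Subgraph.coe_adj, SimpleGraph.Subgraph.deleteVerts_adj,
        SimpleGraph.Subgraph.verts_top, SimpleGraph.Subgraph.top_adj]
      exact ⟨Set.mem_univ _, hj, Set.mem_univ _, hxA, h, fun u v hu => by simp at hu⟩
  apply Set.ncard_le_one_iff_subsingleton.mpr
  intro c _ c' _
  induction c using SimpleGraph.ConnectedComponent.ind with | _ v =>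
  induction c' using SimpleGraph.ConnectedComponent.ind with | _ w =>
  exact SimpleGraph.ConnectedComponent.sound ((hr v).symm.trans (hr w))

theorem LSM.oddComponents_iso {V W : Type*} {G : SimpleGraph V}
    {H : SimpleGraph W} (φ : G ≃g H) : G.oddComponents.ncard = H.oddComponents.ncard := by
  rw [← Set.ncard_image_of_injective _ φ.connectedComponentEquiv.injective]
  congr 1
  ext c
  have h : ∀ c : G.ConnectedComponent, c.supp.ncard = (φ.connectedComponentEquiv c).supp.ncard := by
    intro c
    rw [← Nat.card_coe_set_eq, ← Nat.card_coe_set_eq]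
    exact Nat.card_congr (SimpleGraph.ConnectedComponent.isoEquivSupp φ c)
  constructor
  · rintro ⟨c, hc, rfl⟩
    have hc : Odd _ := hc
    show Odd _
    rwa [← h]
  · intro hc
    refine ⟨φ.connectedComponentEquiv.symm c, ?_, by simp⟩
    show Odd _
    rw [h]
    simpa using hc

theorem LSM.odd_join_of_mem {V : Type*} (G : SimpleGraph V) (d : ℕ)
    (A : Set (V ⊕ Fin d)) (hA : ∀ j : Fin d, Sum.inr j ∈ A) :
    LSM.odd (LSM.join G d) A = LSM.odd G (Sum.inl ⁻¹' A) := by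
  rw [LSM.odd, LSM.odd]
  symm
  apply LSM.oddComponents_iso
  let f : ((⊤ : G.Subgraph).deleteVerts (Sum.inl ⁻¹' A)).verts →
    ((⊤ : (LSM.join G d).Subgraph).deleteVerts A).verts := fun x => ⟨Sum.inl x.1, by
      have := x.2; simpa using this⟩
  have hf : Function.Bijective f := by
    constructor
    · intro x y h
      exact Subtype.ext (Sum.inl_injective (congrArg Subtype.val h))
    · rintro ⟨x | j, hx⟩
      · exact ⟨⟨x, by simpa using hx⟩, rfl⟩
      · exfalso
        have : Sum.inr j ∉ A := by simpa using hx
        exact this (hA j)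
  refine ⟨Equiv.ofBijective f hf, ?_⟩
  rintro ⟨x, hx⟩ ⟨y, hy⟩
  have hx : Sum.inl x ∉ A := by simpa using hx
  have hy : Sum.inl y ∉ A := by simpa using hy
  simp [f, SimpleGraph.Subgraph.deleteVerts_adj, LSM.join_inl, hx, hy]

theorem LSM.matching_card {V : Type*} [Finite V] {G : SimpleGraph V} (M : G.Subgraph)
    (h : M.IsMatching) : M.verts.ncard = 2 * M.edgeSet.ncard := by
  classical
  have := Fintype.ofFinite V
  have hs := M.spanningCoe.sum_degrees_eq_twice_card_edges
  have h1 : M.spanningCoe.edgeFinset.card = M.edgeSet.ncard := by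
    rw [← Set.ncard_coe_finset, SimpleGraph.coe_edgeFinset]; rfl
  rw [h1] at hs
  rw [← hs]
  have hdeg : ∀ v, M.spanningCoe.degree v = if v ∈ M.verts then 1 else 0 := by
    intro v
    rw [SimpleGraph.degree]
    split_ifs with hv
    · obtain ⟨w, hw, hu⟩ := h hv
      rw [Finset.card_eq_one]
      refine ⟨w, ?_⟩
      ext x
      simp only [SimpleGraph.mem_neighborFinset, SimpleGraph.Subgraph.spanningCoe_adj,
        Finset.mem_singleton]
      exact ⟨hu x, fun h => h ▸ hw⟩
    · rw [Finset.card_eq_zero, Finset.eq_empty_iff_forall_notMem]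
      intro x hx
      simp only [SimpleGraph.mem_neighborFinset, SimpleGraph.Subgraph.spanningCoe_adj] at hx
      exact hv hx.fst_mem
  rw [Finset.sum_congr rfl (fun v _ => hdeg v), Finset.sum_boole]
  rw [← Set.ncard_coe_finset]
  simp

theorem LSM.tutte_berge {V : Type*} [Finite V] (G : SimpleGraph V) :
    ∃ (M : G.Subgraph) (A : Set V), M.IsMatching ∧
      Nat.card V + A.ncard ≤ 2 * M.edgeSet.ncard + LSM.odd G A := by
  classical
  obtain ⟨A, hA⟩ := Finite.exists_max (fun A : Set V => (LSM.odd G A : ℤ) - A.ncard)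
  have h0 := hA ∅
  simp only [Set.ncard_empty] at h0
  obtain ⟨d, hd⟩ : ∃ d : ℕ, LSM.odd G A = A.ncard + d :=
    ⟨LSM.odd G A - A.ncard, by omega⟩
  have hcard : Nat.card (V ⊕ Fin d) = Nat.card V + d := by simp [Nat.card_sum]
  have hparA := LSM.odd_parity G A
  have heven : Even (Nat.card (V ⊕ Fin d)) := by
    rw [hcard]
    rw [hd] at hparA
    obtain ⟨h1, h2⟩ := hparA
    rw [Nat.even_iff]
    rw [Nat.odd_iff, Nat.odd_iff] at h1
    omega
  have hpm : ∃ M : (LSM.join G d).Subgraph, M.IsPerfectMatching := by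
    rw [SimpleGraph.tutte]
    intro u hu
    have hu : u.ncard < LSM.odd (LSM.join G d) u := hu
    have hp := LSM.odd_parity (LSM.join G d) u
    have h2 : u.ncard + 2 ≤ LSM.odd (LSM.join G d) u := by
      obtain ⟨h1, h2⟩ := hp
      rw [Nat.even_iff] at heven
      rw [Nat.odd_iff, Nat.odd_iff] at h1
      omega
    by_cases hall : ∀ j : Fin d, Sum.inr j ∈ u
    · rw [LSM.odd_join_of_mem G d u hall] at h2
      have hmax := hA (Sum.inl ⁻¹' u)
      have hun : u.ncard = (Sum.inl ⁻¹' u : Set V).ncard + d := by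
        have : u = Sum.inl '' (Sum.inl ⁻¹' u : Set V) ∪ Set.range (Sum.inr : Fin d → V ⊕ Fin d) := by
          ext x
          rcases x with x | j
          · simp
          · simp [hall j]
        refine (congrArg Set.ncard this).trans ?_
        rw [Set.ncard_union_eq, Set.ncard_image_of_injective _ Sum.inl_injective,
          ← Set.image_univ, Set.ncard_image_of_injective _ Sum.inr_injective]
        · simp
        · rw [Set.disjoint_left]
          rintro _ ⟨x, -, rfl⟩ ⟨y, hy⟩
          simp at hy
      omega
    · push Not at hall
      obtain ⟨j, hj⟩ := hall
      have := LSM.odd_join_of_notMem G d u j hj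
      omega
  obtain ⟨M', hM'⟩ := hpm
  rw [SimpleGraph.Subgraph.isPerfectMatching_iff] at hM'
  let M : G.Subgraph :=
    { verts := {v | ∃ w, M'.Adj (Sum.inl v) (Sum.inl w)}
      Adj := fun v w => M'.Adj (Sum.inl v) (Sum.inl w)
      adj_sub := fun h => (LSM.join_inl G d _ _).mp h.adj_sub
      edge_vert := fun h => ⟨_, h⟩
      symm := ⟨fun v w h => h.symm⟩ }
  have hM : M.IsMatching := by
    rintro v ⟨w, hw⟩
    obtain ⟨x, -, hx⟩ := hM' (Sum.inl v)
    refine ⟨w, hw, fun y hy => ?_⟩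
    exact Sum.inl_injective ((hx _ hy).trans (hx _ hw).symm)
  refine ⟨M, A, hM, ?_⟩
  rw [← LSM.matching_card M hM]
  have hcompl : (M.vertsᶜ).ncard ≤ d := by
    choose f hf hfu using hM'
    have : ∀ v ∈ M.vertsᶜ, ∃ j : Fin d, f (Sum.inl v) = Sum.inr j := by
      intro v hv
      rcases hx : f (Sum.inl v) with w | j
      · exact (hv ⟨w, hx ▸ hf (Sum.inl v)⟩).elim
      · exact ⟨j, rfl⟩
    have hle : (M.vertsᶜ).ncard ≤ (Set.range (Sum.inr : Fin d → V ⊕ Fin d)).ncard := by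
      refine Set.ncard_le_ncard_of_injOn (fun v => f (Sum.inl v)) ?_ ?_ (Set.toFinite _)
      · intro v hv
        obtain ⟨j, hj⟩ := this v hv
        exact ⟨j, hj.symm⟩
      · intro v _ w _ hvw
        have h1 := (hf (Sum.inl v)).symm
        have h2 := (hf (Sum.inl w)).symm
        simp only at hvw
        rw [← hvw] at h2
        exact Sum.inl_injective ((hfu _ _ h1).trans (hfu _ _ h2).symm)
    rw [← Set.image_univ, Set.ncard_image_of_injective _ Sum.inr_injective] at hle
    simpa using hle
  have := Set.ncard_add_ncard_compl M.verts
  omega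

theorem LSM.odd_count {V : Type*} [Finite V] (G : SimpleGraph V) (A : Set V) :
    A.ncard + 3 * LSM.odd G A ≤
      Nat.card V + 2 * {v : V | v ∉ A ∧ ∀ w, G.Adj v w → w ∈ A}.ncard := by
  classical
  set H := ((⊤ : G.Subgraph).deleteVerts A).coe with hH
  have hF := Fintype.ofFinite ((⊤ : G.Subgraph).deleteVerts A).verts
  have hF' := Fintype.ofFinite H.ConnectedComponent
  have hcardW : Nat.card ((⊤ : G.Subgraph).deleteVerts A).verts = Nat.card V - A.ncard := by
    rw [Nat.card_coe_set_eq]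
    simp only [SimpleGraph.Subgraph.deleteVerts_verts, SimpleGraph.Subgraph.verts_top]
    rw [Set.ncard_sdiff (Set.subset_univ _), Set.ncard_univ]
  have hAle : A.ncard ≤ Nat.card V := Set.ncard_le_card A
  have hsum : ∑ c : H.ConnectedComponent, c.supp.ncard = Nat.card V - A.ncard := by
    rw [← hcardW, Nat.card_eq_fintype_card, ← Finset.card_univ,
      Finset.card_eq_sum_card_fiberwise (f := H.connectedComponentMk) (t := Finset.univ)
        (fun _ _ => Finset.mem_coe.mpr (Finset.mem_univ _))]
    apply Finset.sum_congr rfl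
    intro c _
    rw [← Set.ncard_coe_finset]
    congr 1
    ext v
    simp [SimpleGraph.ConnectedComponent.mem_supp_iff]
  let O := Finset.univ.filter (fun c : H.ConnectedComponent => Odd c.supp.ncard)
  let O1 := Finset.univ.filter (fun c : H.ConnectedComponent => c.supp.ncard = 1)
  have hO : LSM.odd G A = O.card := by
    rw [LSM.odd, ← Set.ncard_coe_finset]
    congr 1
    ext c
    exact ⟨fun h => Finset.mem_coe.mpr (Finset.mem_filter.mpr ⟨Finset.mem_univ _, h⟩), fun h => (Finset.mem_filter.mp (Finset.mem_coe.mp h)).2⟩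
  have hO1 : O1.card ≤ {v : V | v ∉ A ∧ ∀ w, G.Adj v w → w ∈ A}.ncard := by
    have hex : ∀ c : H.ConnectedComponent, c ∈ O1 → ∃ x, c.supp = {x} := by
      intro c hc
      exact Set.ncard_eq_one.mp (Finset.mem_filter.mp hc).2
    rw [← Set.ncard_coe_finset]
    let g : H.ConnectedComponent → V := fun c => (c.out : ((⊤ : G.Subgraph).deleteVerts A).verts).1
    have hg : ∀ c, c.out ∈ SimpleGraph.ConnectedComponent.supp (G := H) c := fun c => c.out_eq
    refine Set.ncard_le_ncard_of_injOn g ?_ ?_ (Set.toFinite _)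
    · intro c hc
      obtain ⟨x, hx⟩ := hex c hc
      have hgx : c.out = x := by have := hg c; rwa [hx] at this
      have hcA : (c.out : ((⊤ : G.Subgraph).deleteVerts A).verts).1 ∉ A := by
        have := (c.out : ((⊤ : G.Subgraph).deleteVerts A).verts).2
        simpa using this
      refine ⟨hcA, fun w hw => ?_⟩
      by_contra hwA
      have hwv : w ∈ ((⊤ : G.Subgraph).deleteVerts A).verts := by simpa using hwA
      have hadj : H.Adj c.out ⟨w, hwv⟩ := by
        simp only [hH, SimpleGraph.Subgraph.coe_adj, SimpleGraph.Subgraph.deleteVerts_adj,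
          SimpleGraph.Subgraph.verts_top, SimpleGraph.Subgraph.top_adj]
        exact ⟨Set.mem_univ _, hcA, Set.mem_univ _, hwA, hw⟩
      have hmem : (⟨w, hwv⟩ : ((⊤ : G.Subgraph).deleteVerts A).verts) ∈ c.supp :=
        (c.mem_supp_congr_adj hadj).mp (hg c)
      rw [hx, Set.mem_singleton_iff, ← hgx] at hmem
      exact hadj.ne hmem.symm
    · intro c _ c' _ h
      have : c.out = c'.out := Subtype.ext h
      rw [← c.out_eq, ← c'.out_eq, this]
  have hmain : 3 * O.card ≤ (∑ c : H.ConnectedComponent, c.supp.ncard) + 2 * O1.card := by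
    have e1 : 3 * O.card = ∑ c : H.ConnectedComponent, if Odd c.supp.ncard then 3 else 0 := by
      rw [← Finset.sum_filter, Finset.sum_const, smul_eq_mul, mul_comm]
    have e2 : 2 * O1.card = ∑ c : H.ConnectedComponent, if c.supp.ncard = 1 then 2 else 0 := by
      rw [← Finset.sum_filter, Finset.sum_const, smul_eq_mul, mul_comm]
    rw [e1, e2, ← Finset.sum_add_distrib]
    apply Finset.sum_le_sum
    intro c _
    split_ifs with h1 h2 h2
    · omega
    · rw [Nat.odd_iff] at h1; omega
    · omega
    · omega
  rw [hO]
  omega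

theorem LSM.isolated_bound {V : Type*} [Fintype V] (G : SimpleGraph V) [DecidableRel G.Adj]
    (hG : ¬ LSM.HasK33 G) (A : Set V) :
    {v : V | (v ∉ A ∧ ∀ w, G.Adj v w → w ∈ A) ∧ ∃ w, G.Adj v w ∧ G.degree w ≤ G.degree v}.ncard
      ≤ 2 * A.ncard := by
  classical
  let A1 : Finset V := Finset.univ.filter (fun a => a ∈ A ∧ G.degree a ≤ 2)
  let A2 : Finset V := Finset.univ.filter (fun a => a ∈ A ∧ ¬ G.degree a ≤ 2)
  have hA : A.ncard = A1.card + A2.card := by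
    have h : A.ncard = (Finset.univ.filter (fun a => a ∈ A)).card := by
      rw [← Set.ncard_coe_finset]; simp
    rw [h, ← Finset.card_filter_add_card_filter_not (fun a => G.degree a ≤ 2),
      Finset.filter_filter, Finset.filter_filter]
  let I1 : Finset V := A1.biUnion (fun a => G.neighborFinset a)
  have hI1 : I1.card ≤ 2 * A1.card := by
    rw [mul_comm]
    apply Finset.card_biUnion_le_card_mul
    intro a ha
    rw [SimpleGraph.card_neighborFinset_eq_degree]
    exact (Finset.mem_filter.mp ha).2.2
  let I2 : Finset V := Finset.univ.filter (fun v => ((v ∉ A ∧ ∀ w, G.Adj v w → w ∈ A) ∧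
    ∃ w, G.Adj v w ∧ G.degree w ≤ G.degree v) ∧ v ∉ I1)
  have hI2 : I2.card ≤ 2 * A2.card := by
    have hnb : ∀ v ∈ I2, G.neighborFinset v ⊆ A2 := by
      intro v hv w hw
      simp only [I2, Finset.mem_filter, Finset.mem_univ, true_and] at hv
      rw [SimpleGraph.mem_neighborFinset] at hw
      have hwA := hv.1.1.2 w hw
      simp only [A2, Finset.mem_filter, Finset.mem_univ, true_and]
      refine ⟨hwA, fun hd => hv.2 ?_⟩
      simp only [I1, Finset.mem_biUnion, A1, Finset.mem_filter, Finset.mem_univ, true_and]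
      exact ⟨w, ⟨hwA, hd⟩, by rw [SimpleGraph.mem_neighborFinset]; exact hw.symm⟩
    have hex : ∀ v, ∃ t : Finset V, v ∈ I2 → t ⊆ G.neighborFinset v ∧ t.card = 3 := by
      intro v
      by_cases hv : v ∈ I2
      · have hsub := hnb v hv
        have h3 : 3 ≤ (G.neighborFinset v).card := by
          simp only [I2, Finset.mem_filter, Finset.mem_univ, true_and] at hv
          obtain ⟨w, hw, hd⟩ := hv.1.2
          have : w ∈ A2 := hsub (by rw [SimpleGraph.mem_neighborFinset]; exact hw)
          have := (Finset.mem_filter.mp this).2.2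
          rw [SimpleGraph.card_neighborFinset_eq_degree]
          omega
        obtain ⟨t, ht, ht3⟩ := Finset.exists_subset_card_eq h3
        exact ⟨t, fun _ => ⟨ht, ht3⟩⟩
      · exact ⟨∅, fun h => (hv h).elim⟩
    choose τ hτ using hex
    refine LSM.bound hG A2.card (τ := τ) (B := fun k => {k}) ⟨?_, ?_, ?_, ?_, ?_, ?_⟩ rfl
    · intro s hs; exact (hτ s hs).1.trans (hnb s hs)
    · intro s hs; exact (hτ s hs).2
    · intro s hs k hk
      exact ⟨k, rfl, (SimpleGraph.mem_neighborFinset _ _ _).mp ((hτ s hs).1 hk)⟩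
    · intro k _ x hx y hy
      rw [Set.mem_singleton_iff.mp hx, Set.mem_singleton_iff.mp hy]
    · intro k _ l _ hkl
      simpa using hkl
    · intro s hs k hk hsk
      rw [Set.mem_singleton_iff] at hsk
      subst hsk
      exact (Finset.mem_filter.mp hs).2.1.1.1 (Finset.mem_filter.mp hk).2.1
  have hsub : {v : V | (v ∉ A ∧ ∀ w, G.Adj v w → w ∈ A) ∧
      ∃ w, G.Adj v w ∧ G.degree w ≤ G.degree v} ⊆ ((I1 ∪ I2 : Finset V) : Set V) := by
    intro v hv
    by_cases h : v ∈ I1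
    · simp [h]
    · have : v ∈ I2 := Finset.mem_filter.mpr ⟨Finset.mem_univ _, hv, h⟩
      simp [this]
  have h1 := Set.ncard_le_ncard hsub (Set.toFinite _)
  rw [Set.ncard_coe_finset] at h1
  have h2 := Finset.card_union_le I1 I2
  omega

/-- If `G` is planar, the number of locally superior vertices satisfies
`|L(G)| ≤ 3ν(G)`. -/
theorem locally_superior_le_three_matching {V : Type*} [Fintype V]
    (G : SimpleGraph V) [DecidableRel G.Adj] (hplanar : G.IsPlanar) :
    ∃ M : G.Subgraph, M.IsMatching ∧
      ({v : V | ∃ w, G.Adj v w ∧ G.degree w ≤ G.degree v} : Set V).ncard ≤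
        3 * M.edgeSet.ncard := by
  classical
  have hK := LSM.not_hasK33 G hplanar
  obtain ⟨M, A, hM, hMA⟩ := LSM.tutte_berge G
  refine ⟨M, hM, ?_⟩
  have h1 := LSM.odd_count G A
  have h2 := LSM.isolated_bound G hK A
  set L : Set V := {v : V | ∃ w, G.Adj v w ∧ G.degree w ≤ G.degree v} with hL
  set J : Set V := {v : V | v ∉ A ∧ ∀ w, G.Adj v w → w ∈ A} with hJ
  have h3 : {v : V | (v ∉ A ∧ ∀ w, G.Adj v w → w ∈ A) ∧
    ∃ w, G.Adj v w ∧ G.degree w ≤ G.degree v} = J ∩ L := rfl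
  rw [h3] at h2
  have h4 : L.ncard ≤ (Jᶜ).ncard + (J ∩ L).ncard := by
    refine le_trans (Set.ncard_le_ncard ?_ (Set.toFinite _)) (Set.ncard_union_le _ _)
    intro v hv
    by_cases h : v ∈ J
    · exact Or.inr ⟨h, hv⟩
    · exact Or.inl h
  have h5 := Set.ncard_add_ncard_compl J
  omega
end
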